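/- arXiv:2009.02712 — 2 statements merged into one kernel-verified Lean document; each statement's English description precedes it below -/
import Mathlib

section
/- Let 0 < ρ₀ < 1, λ₀ > 0, and set B₁ = 43, B₂ = 4.6. If a real number k satisfies k ≥ (1/ρ₀) · max{ B₁/B₂, ln(2B₂ k / λ₀) }, then for every t₀ ≥ e^k and every λ ≥ λ₀, the function ρ ↦ E_ρ(−λ t₀^ρ) is strictly monotonically decreasing on the interval [ρ₀, 1). -/
open Set Real

/-- The Mittag-Leffler function `E_ρ(z) = ∑_{k=0}^∞ z^k / Γ(ρk + 1)`. -/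
noncomputable def mittagLeffler (ρ z : ℝ) : ℝ := ∑' k : ℕ, z ^ k / Real.Gamma (ρ * k + 1)


/-! ### Part 1: contour integrals -/
open MeasureTheory Filter Topology

/-- The (log-coordinate) Hankel contour integral. -/
noncomputable def hankC (K : ℂ → ℂ) (c : ℝ) : ℂ :=
  (∫ u in Ioi c, K ((u : ℂ) + (π : ℝ) * Complex.I)) -
  (∫ u in Ioi c, K ((u : ℂ) + ((-π : ℝ) : ℂ) * Complex.I)) +
  Complex.I * ∫ y in (-π)..π, K ((c : ℂ) + (y : ℂ) * Complex.I)

lemma hankC_eq_of_le (K : ℂ → ℂ)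
    (hK : ∀ w : ℂ, |w.im| ≤ π → DifferentiableAt ℂ K w)
    (h1 : ∀ c : ℝ, IntegrableOn (fun u : ℝ => K ((u : ℂ) + (π : ℝ) * Complex.I)) (Ioi c))
    (h2 : ∀ c : ℝ, IntegrableOn (fun u : ℝ => K ((u : ℂ) + ((-π : ℝ) : ℂ) * Complex.I)) (Ioi c))
    (c d : ℝ) (hcd : c ≤ d) : hankC K c = hankC K d := by
  have hr := Complex.integral_boundary_rect_eq_zero_of_differentiableOn K
    ((c : ℂ) + ((-π : ℝ) : ℂ) * Complex.I) ((d : ℂ) + ((π : ℝ) : ℂ) * Complex.I) (by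
      intro w hw
      apply (hK w _).differentiableWithinAt
      have := hw.2
      simp only [Complex.add_im, Complex.ofReal_im, Complex.mul_im, Complex.ofReal_re,
        Complex.I_im, Complex.I_re, mul_one, mul_zero, add_zero, zero_add, mem_preimage] at this
      rw [uIcc_of_le (by linarith [pi_pos])] at this
      exact abs_le.2 this)
  simp only [Complex.add_im, Complex.ofReal_im, Complex.mul_im, Complex.ofReal_re,
        Complex.I_im, Complex.I_re, mul_one, mul_zero, add_zero, zero_add, Complex.add_re,
        Complex.mul_re, sub_zero, smul_eq_mul] at hr
  have e1 := intervalIntegral.integral_Ioi_sub_Ioi (h1 c) hcd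
  have e2 := intervalIntegral.integral_Ioi_sub_Ioi (h2 c) hcd
  unfold hankC
  rw [← e1, ← e2] at hr
  linear_combination -hr

lemma hankC_indep (K : ℂ → ℂ)
    (hK : ∀ w : ℂ, |w.im| ≤ π → DifferentiableAt ℂ K w)
    (h1 : ∀ c : ℝ, IntegrableOn (fun u : ℝ => K ((u : ℂ) + (π : ℝ) * Complex.I)) (Ioi c))
    (h2 : ∀ c : ℝ, IntegrableOn (fun u : ℝ => K ((u : ℂ) + ((-π : ℝ) : ℂ) * Complex.I)) (Ioi c))
    (c d : ℝ) : hankC K c = hankC K d := by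
  rcases le_total c d with h | h
  · exact hankC_eq_of_le K hK h1 h2 c d h
  · exact (hankC_eq_of_le K hK h1 h2 d c h).symm

lemma vert_tendsto (K : ℂ → ℂ) (b : ℝ → ℝ) (hb : Tendsto b atBot (𝓝 0))
    (hKb : ∀ᶠ c : ℝ in atBot, ∀ y : ℝ, ‖K ((c : ℂ) + (y : ℂ) * Complex.I)‖ ≤ b c) :
    Tendsto (fun c : ℝ => ∫ y in (-π)..π, K ((c : ℂ) + (y : ℂ) * Complex.I)) atBot (𝓝 0) := by
  have : Tendsto (fun c => b c * |π - (-π)|) atBot (𝓝 0) := by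
    simpa using hb.mul_const (|π - (-π)|)
  apply squeeze_zero_norm' _ this
  filter_upwards [hKb] with c hc
  exact intervalIntegral.norm_integral_le_of_norm_le_const fun y _ => hc y

lemma hankC_collapse (K : ℂ → ℂ)
    (hK : ∀ w : ℂ, |w.im| ≤ π → DifferentiableAt ℂ K w)
    (h1 : Integrable (fun u : ℝ => K ((u : ℂ) + (π : ℝ) * Complex.I)))
    (h2 : Integrable (fun u : ℝ => K ((u : ℂ) + ((-π : ℝ) : ℂ) * Complex.I)))
    (b : ℝ → ℝ) (hb : Tendsto b atBot (𝓝 0))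
    (hKb : ∀ᶠ c : ℝ in atBot, ∀ y : ℝ, ‖K ((c : ℂ) + (y : ℂ) * Complex.I)‖ ≤ b c) (c : ℝ) :
    hankC K c = (∫ u : ℝ, K ((u : ℂ) + (π : ℝ) * Complex.I)) -
      (∫ u : ℝ, K ((u : ℂ) + ((-π : ℝ) : ℂ) * Complex.I)) := by
  have t1 := (aecover_Ioi (μ := volume) (l := atBot) (a := fun x : ℝ => x)
    tendsto_id).integral_tendsto_of_countably_generated h1
  have t2 := (aecover_Ioi (μ := volume) (l := atBot) (a := fun x : ℝ => x)
    tendsto_id).integral_tendsto_of_countably_generated h2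
  have t3 := vert_tendsto K b hb hKb
  have t := (t1.sub t2).add (t3.const_mul Complex.I)
  rw [mul_zero, add_zero] at t
  refine tendsto_nhds_unique_of_eventuallyEq tendsto_const_nhds t ?_
  filter_upwards with d
  exact hankC_indep K hK (fun c => h1.integrableOn) (fun c => h2.integrableOn) c d

/-- The Hankel kernel. -/
noncomputable def hK (a : ℝ) (w : ℂ) : ℂ := Complex.exp (Complex.exp w - a * w)

lemma hK_norm (a : ℝ) (w : ℂ) : ‖hK a w‖ = exp ((exp w.re) * cos w.im - a * w.re) := by
  simp [hK, Complex.norm_exp, Complex.exp_re]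

lemma hK_norm_le (a : ℝ) (w : ℂ) : ‖hK a w‖ ≤ exp ((exp w.re) - a * w.re) := by
  rw [hK_norm, exp_le_exp]
  have := cos_le_one w.im
  nlinarith [exp_pos w.re]

lemma hK_diff (a : ℝ) (w : ℂ) : HasDerivAt (hK a) (hK (a-1) w - a * hK a w) w := by
  unfold hK
  have h : HasDerivAt (fun w : ℂ => Complex.exp w - a * w) (Complex.exp w - a * 1) w :=
    (Complex.hasDerivAt_exp w).sub ((hasDerivAt_id w).const_mul (a : ℂ))
  have h' := h.cexp
  have : Complex.exp (Complex.exp w - ((a - 1 : ℝ) : ℂ) * w) =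
    Complex.exp (Complex.exp w - a * w) * Complex.exp w := by
    rw [← Complex.exp_add]; congr 1; push_cast; ring
  rw [this]
  refine h'.congr_deriv ?_
  ring

lemma exp_pi_ray (u : ℝ) : Complex.exp ((u : ℂ) + (π : ℝ) * Complex.I) = -(exp u : ℝ) := by
  rw [Complex.exp_add, Complex.exp_pi_mul_I]; push_cast; ring

lemma exp_neg_pi_ray (u : ℝ) :
    Complex.exp ((u : ℂ) + ((-π : ℝ) : ℂ) * Complex.I) = -(exp u : ℝ) := by
  have : Complex.exp (((-π : ℝ) : ℂ) * Complex.I) = -1 := by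
    push_cast
    rw [neg_mul, Complex.exp_neg, Complex.exp_pi_mul_I]; norm_num
  rw [Complex.exp_add, this]; push_cast; ring

lemma hK_ray (a u : ℝ) : hK a ((u : ℂ) + (π : ℝ) * Complex.I) =
    (exp (-exp u - a * u) : ℝ) * Complex.exp (-(a * π : ℝ) * Complex.I) := by
  rw [hK, exp_pi_ray, Complex.ofReal_exp (-exp u - a * u), ← Complex.exp_add]
  congr 1; push_cast; ring

lemma hK_ray' (a u : ℝ) : hK a ((u : ℂ) + ((-π : ℝ) : ℂ) * Complex.I) =
    (exp (-exp u - a * u) : ℝ) * Complex.exp ((a * π : ℝ) * Complex.I) := by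
  rw [hK, exp_neg_pi_ray, Complex.ofReal_exp (-exp u - a * u), ← Complex.exp_add]
  congr 1; push_cast; ring

lemma gamma_exp (s : ℝ) (hs : 0 < s) :
    Integrable (fun u : ℝ => exp (-exp u + s * u)) ∧
    ∫ u : ℝ, exp (-exp u + s * u) = Gamma s := by
  have him : exp '' univ = Ioi 0 := by rw [image_univ, range_exp]
  have hd : ∀ x ∈ (univ : Set ℝ), HasDerivWithinAt exp (exp x) univ x :=
    fun x _ => (hasDerivAt_exp x).hasDerivWithinAt
  have hfun : (fun u : ℝ => |exp u| • (exp (-exp u) * (exp u) ^ (s - 1))) =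
      fun u : ℝ => exp (-exp u + s * u) := by
    ext u
    rw [abs_of_pos (exp_pos u), smul_eq_mul, ← exp_mul, ← exp_add, ← exp_add]
    congr 1; ring
  constructor
  · have := (integrableOn_image_iff_integrableOn_abs_deriv_smul MeasurableSet.univ hd
      exp_injective.injOn (fun x => exp (-x) * x ^ (s - 1))).1
      (by rw [him]; exact GammaIntegral_convergent hs)
    rw [hfun, integrableOn_univ] at this
    exact this
  · have := integral_image_eq_integral_abs_deriv_smul MeasurableSet.univ hd
      exp_injective.injOn (fun x => exp (-x) * x ^ (s - 1))
    rw [him, hfun, setIntegral_univ] at this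
    rw [← this, Gamma_eq_integral hs]

lemma int_ray (a c : ℝ) : IntegrableOn (fun u : ℝ => exp (-exp u - a * u)) (Ioi c) := by
  by_cases ha : a < 0
  · have := (gamma_exp (-a) (by linarith)).1
    refine (this.congr ?_).integrableOn
    filter_upwards with u
    congr 1; ring
  · have := ((gamma_exp 1 one_pos).1.const_mul (exp (-(a + 1) * c))).integrableOn (s := Ioi c)
    refine this.mono' (by fun_prop) ?_
    refine (ae_restrict_iff' measurableSet_Ioi).2 (Eventually.of_forall fun u hu => ?_)
    rw [norm_of_nonneg (exp_pos _).le, ← exp_add, exp_le_exp]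
    have : c < u := hu
    nlinarith

lemma hK_int (a c : ℝ) :
    IntegrableOn (fun u : ℝ => hK a ((u : ℂ) + (π : ℝ) * Complex.I)) (Ioi c) := by
  simp_rw [hK_ray]
  exact ((int_ray a c).ofReal (𝕜 := ℂ)).mul_const _

lemma hK_int' (a c : ℝ) :
    IntegrableOn (fun u : ℝ => hK a ((u : ℂ) + ((-π : ℝ) : ℂ) * Complex.I)) (Ioi c) := by
  simp_rw [hK_ray']
  exact ((int_ray a c).ofReal (𝕜 := ℂ)).mul_const _

lemma hK_indep (a c d : ℝ) : hankC (hK a) c = hankC (hK a) d :=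
  hankC_indep _ (fun w _ => (hK_diff a w).differentiableAt) (hK_int a) (hK_int' a) c d

lemma tendsto_bd (a : ℝ) (ha : a < 0) : Tendsto (fun c : ℝ => exp (exp c - a * c)) atBot (𝓝 0) := by
  apply tendsto_exp_atBot.comp
  have h1 : Tendsto (fun c : ℝ => - a * c) atBot atBot :=
    tendsto_id.const_mul_atBot (by linarith)
  have h2 := (tendsto_exp_atBot).add_atBot h1
  refine h2.congr fun c => by ring

lemma hankel_neg (a c : ℝ) (ha : -1 < a) (ha' : a < 0) :
    hankC (hK a) c = 2 * π * Complex.I / Gamma (1 + a) := by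
  have hi := gamma_exp (-a) (by linarith)
  have hfe : ∀ u : ℝ, exp (-exp u + -a * u) = exp (-exp u - a * u) := fun u => by congr 1; ring
  simp_rw [hfe] at hi
  rw [hankC_collapse (hK a) (fun w _ => (hK_diff a w).differentiableAt)
    (by simp_rw [hK_ray]; exact (hi.1.ofReal (𝕜 := ℂ)).mul_const _)
    (by simp_rw [hK_ray']; exact (hi.1.ofReal (𝕜 := ℂ)).mul_const _)
    _ (tendsto_bd a ha') (Eventually.of_forall fun c y => by
      simpa using hK_norm_le a ((c : ℂ) + (y : ℂ) * Complex.I))]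
  simp_rw [hK_ray, hK_ray']
  rw [integral_mul_const, integral_mul_const, integral_complex_ofReal, hi.2, ← mul_sub]
  have hs : Complex.exp (-(a * π : ℝ) * Complex.I) - Complex.exp ((a * π : ℝ) * Complex.I)
      = 2 * (sin (π * -a) : ℝ) * Complex.I := by
    rw [mul_neg, sin_neg, mul_comm π a]
    push_cast
    rw [Complex.sin]
    have := Complex.I_mul_I
    linear_combination (Complex.exp (-(a * π) * Complex.I) - Complex.exp ((a * π) * Complex.I)) * this
  rw [hs]
  have hr := Gamma_mul_Gamma_one_sub (-a)
  rw [sub_neg_eq_add] at hr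
  have hsin : sin (π * -a) ≠ 0 :=
    (sin_pos_of_pos_of_lt_pi (by nlinarith [pi_pos]) (by nlinarith [pi_pos])).ne'
  have hg : Gamma (1 + a) ≠ 0 := (Gamma_pos_of_pos (by linarith)).ne'
  rw [eq_div_iff (by exact_mod_cast hg)]
  rw [eq_div_iff hsin] at hr
  have hr' : (Gamma (-a) : ℂ) * Gamma (1 + a) * (sin (π * -a) : ℝ) = π := by exact_mod_cast hr
  linear_combination 2 * Complex.I * hr'

lemma hankel_zero (c : ℝ) : hankC (hK 0) c = 2 * π * Complex.I := by
  have hC : ∀ d : ℝ, hankC (hK 0) d =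
      Complex.I * ∫ y in (-π)..π, hK 0 ((d : ℂ) + (y : ℂ) * Complex.I) := by
    intro d
    unfold hankC
    simp_rw [hK_ray, hK_ray']
    simp
  have hi : ∀ d : ℝ, IntervalIntegrable
      (fun y : ℝ => hK 0 ((d : ℂ) + (y : ℂ) * Complex.I)) volume (-π) π := by
    intro d
    apply Continuous.intervalIntegrable
    unfold hK; fun_prop
  have ht := vert_tendsto (fun w => hK 0 w - 1) (fun c => 2 * exp c) (by
      simpa using tendsto_exp_atBot.const_mul 2) (by
      filter_upwards [eventually_le_atBot (0 : ℝ)] with d hd y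
      have := Complex.norm_exp_sub_one_le
        (x := Complex.exp ((d : ℂ) + (y : ℂ) * Complex.I)) (by
          simp [Complex.norm_exp, hd])
      simpa [hK, Complex.norm_exp] using this)
  have ht2 := (ht.add_const (2 * π : ℂ)).const_mul Complex.I
  rw [zero_add] at ht2
  have : Tendsto (fun d : ℝ => hankC (hK 0) d) atBot (𝓝 (Complex.I * (2 * π : ℂ))) := by
    refine ht2.congr fun d => ?_
    rw [hC, intervalIntegral.integral_sub (hi d) (by simp), intervalIntegral.integral_const]
    congr 1
    rw [Complex.real_smul]; push_cast; ring
  rw [tendsto_nhds_unique (tendsto_const_nhds.congr fun d => hK_indep 0 c d) this]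
  ring

lemma ray_tendsto (a : ℝ) : Tendsto (fun u : ℝ => exp (-exp u - a * u)) atTop (𝓝 0) := by
  apply tendsto_exp_atBot.comp
  have h1 : Tendsto (fun u : ℝ => exp u * (1 + a * (u / exp u))) atTop atTop := by
    apply tendsto_exp_atTop.atTop_mul_pos one_pos
    have := tendsto_pow_mul_exp_neg_atTop_nhds_zero 1
    have h2 := (this.const_mul a).const_add 1
    simp only [mul_zero, add_zero] at h2
    refine h2.congr fun u => ?_
    rw [exp_neg, pow_one]; rfl
  refine (tendsto_neg_atTop_atBot.comp h1).congr fun u => ?_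
  simp only [Function.comp]
  field_simp
  ring

lemma hankel_rec (a c : ℝ) : hankC (hK (a - 1)) c = a * hankC (hK a) c := by
  -- integrals of the derivative
  have hder : ∀ θ : ℝ, ∀ u : ℝ, HasDerivAt (fun u : ℝ => hK a ((u : ℂ) + (θ : ℂ) * Complex.I))
      (hK (a-1) ((u : ℂ) + (θ : ℂ) * Complex.I) - a * hK a ((u : ℂ) + (θ : ℂ) * Complex.I)) u := by
    intro θ u
    have h := (hK_diff a ((u : ℂ) + (θ : ℂ) * Complex.I))
    have h2 : HasDerivAt (fun u : ℝ => (u : ℂ) + (θ : ℂ) * Complex.I) 1 u :=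
      (Complex.ofRealCLM.hasDerivAt (x := u)).add_const _
    have h3 := h.comp u h2
    rw [mul_one] at h3
    exact h3
  have hderv : ∀ y : ℝ, HasDerivAt (fun y : ℝ => hK a ((c : ℂ) + (y : ℂ) * Complex.I))
      (Complex.I * (hK (a-1) ((c : ℂ) + (y : ℂ) * Complex.I)
        - a * hK a ((c : ℂ) + (y : ℂ) * Complex.I))) y := by
    intro y
    have h := (hK_diff a ((c : ℂ) + (y : ℂ) * Complex.I))
    have h2 : HasDerivAt (fun y : ℝ => (c : ℂ) + (y : ℂ) * Complex.I) (1 * Complex.I) y :=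
      ((Complex.ofRealCLM.hasDerivAt (x := y)).mul_const _).const_add _
    have := h.comp y h2
    rw [one_mul, mul_comm] at this
    exact this
  have r1 := integral_Ioi_of_hasDerivAt_of_tendsto (a := c) (m := 0)
    (hder π c).continuousAt.continuousWithinAt (fun u _ => hder π u)
    ((hK_int (a-1) c).sub ((hK_int a c).const_mul _)) (by
      simp_rw [hK_ray]
      have := (Complex.continuous_ofReal.tendsto 0).comp (ray_tendsto a)
      simpa using this.mul_const _)
  have r2 := integral_Ioi_of_hasDerivAt_of_tendsto (a := c) (m := 0)
    (hder (-π) c).continuousAt.continuousWithinAt (fun u _ => hder (-π) u)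
    ((hK_int' (a-1) c).sub ((hK_int' a c).const_mul _)) (by
      simp_rw [hK_ray']
      have := (Complex.continuous_ofReal.tendsto 0).comp (ray_tendsto a)
      simpa using this.mul_const _)
  have hcont : ∀ b : ℝ, Continuous (fun y : ℝ => hK b ((c : ℂ) + (y : ℂ) * Complex.I)) := by
    intro b; unfold hK; fun_prop
  have r3 := intervalIntegral.integral_eq_sub_of_hasDerivAt (a := -π) (b := π)
    (fun y _ => hderv y) (Continuous.intervalIntegrable
      (continuous_const.mul ((hcont _).sub (continuous_const.mul (hcont _)))) _ _)
  rw [integral_sub (hK_int (a-1) c) ((hK_int a c).const_mul _), integral_const_mul] at r1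
  rw [integral_sub (hK_int' (a-1) c) ((hK_int' a c).const_mul _), integral_const_mul] at r2
  rw [intervalIntegral.integral_const_mul, intervalIntegral.integral_sub
    ((hcont _).intervalIntegrable _ _) (((hcont _).intervalIntegrable _ _).const_mul _),
    intervalIntegral.integral_const_mul] at r3
  unfold hankC
  linear_combination r1 - r2 + r3

lemma hankel_aux (n : ℕ) : ∀ a c : ℝ, -1 < a → a ≤ n →
    hankC (hK a) c = 2 * π * Complex.I / Gamma (1 + a) := by
  induction n with
  | zero =>
    intro a c ha ha'
    rcases lt_or_eq_of_le ha' with h | h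
    · exact hankel_neg a c ha (by simpa using h)
    · rw [show a = 0 by simpa using h, hankel_zero]; simp
  | succ n ih =>
    intro a c ha ha'
    by_cases h0 : a ≤ 0
    · exact ih a c ha (h0.trans (Nat.cast_nonneg n))
    · push Not at h0
      have h1 := ih (a - 1) c (by linarith) (by push_cast at ha'; linarith)
      rw [hankel_rec, show 1 + (a - 1) = a by ring] at h1
      have hg := Gamma_add_one h0.ne'
      rw [add_comm 1 a, hg]
      have h2 : (a : ℂ) ≠ 0 := by exact_mod_cast h0.ne'
      rw [Complex.ofReal_mul, mul_comm (a : ℂ), ← div_div, ← h1, mul_div_cancel_left₀ _ h2]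

lemma hankel (a c : ℝ) (ha : -1 < a) :
    hankC (hK a) c = 2 * π * Complex.I / Gamma (1 + a) :=
  hankel_aux ⌈a⌉₊ a c ha (Nat.le_ceil a)

/-! ### Part 2: integral representation of the Mittag-Leffler function -/

/-- The kernel of the Mittag-Leffler function. -/
noncomputable def mK (ρ x : ℝ) (w : ℂ) : ℂ :=
  hK 0 w * (Complex.exp (ρ * w) / (Complex.exp (ρ * w) + x))

lemma hK_mul_eq (ρ x : ℝ) (k : ℕ) (w : ℂ) :
    ((-x : ℝ) : ℂ) ^ k * hK (ρ * k) w = hK 0 w * (-x * Complex.exp (-(ρ * w))) ^ k := by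
  rw [mul_pow, ← Complex.exp_nat_mul]
  have : hK (ρ * k) w = hK 0 w * Complex.exp (k * -(ρ * w)) := by
    unfold hK
    rw [← Complex.exp_add]
    congr 1; push_cast; ring
  rw [this]; push_cast; ring

lemma mK_hasSum {α : Type*} [MeasurableSpace α] (μ : Measure α) (γ : α → ℂ) (hγ : Measurable γ)
    (ρ x c : ℝ) (hρ : 0 < ρ) (hx : 0 < x) (hc : x * exp (-(ρ * c)) ≤ 1 / 2)
    (hre : ∀ᵐ a ∂μ, c ≤ (γ a).re) (hInt0 : Integrable (fun a => hK 0 (γ a)) μ) :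
    HasSum (fun k : ℕ => ((-x : ℝ) : ℂ) ^ k * ∫ a, hK (ρ * k) (γ a) ∂μ)
      (∫ a, mK ρ x (γ a) ∂μ) := by
  have hb : ∀ᵐ a ∂μ, ‖(-x * Complex.exp (-(ρ * γ a)) : ℂ)‖ ≤ 1 / 2 := by
    filter_upwards [hre] with a ha
    refine le_trans ?_ hc
    rw [norm_mul, norm_neg, Complex.norm_real, norm_of_nonneg hx.le, Complex.norm_exp]
    gcongr
    simp
    nlinarith
  have hbk : ∀ k : ℕ, ∀ᵐ a ∂μ, ‖hK 0 (γ a) * (-x * Complex.exp (-(ρ * γ a))) ^ k‖ ≤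
      (1 / 2) ^ k * ‖hK 0 (γ a)‖ := by
    intro k
    filter_upwards [hb] with a ha
    rw [norm_mul, norm_pow, mul_comm]
    gcongr
  have hI : ∀ k : ℕ, Integrable (fun a => hK 0 (γ a) * (-x * Complex.exp (-(ρ * γ a))) ^ k) μ := by
    intro k
    refine Integrable.mono' (hInt0.norm.const_mul ((1 / 2) ^ k)) ?_ (hbk k)
    exact hInt0.aestronglyMeasurable.mul (Measurable.aestronglyMeasurable (by fun_prop))
  have hs : Summable fun k : ℕ =>
      ∫ a, ‖hK 0 (γ a) * (-x * Complex.exp (-(ρ * γ a))) ^ k‖ ∂μ := by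
    refine Summable.of_nonneg_of_le (fun k => integral_nonneg fun a => norm_nonneg _) (fun k => ?_)
      ((summable_geometric_of_lt_one (r := (1 / 2 : ℝ)) (by norm_num) (by norm_num)).mul_right
        (∫ a, ‖hK 0 (γ a)‖ ∂μ))
    rw [← integral_const_mul]
    exact integral_mono_ae (hI k).norm (hInt0.norm.const_mul _) (hbk k)
  have h := hasSum_integral_of_summable_integral_norm hI hs
  have e1 : ∀ k : ℕ, ∫ a, hK 0 (γ a) * (-x * Complex.exp (-(ρ * γ a))) ^ k ∂μ =
      ((-x : ℝ) : ℂ) ^ k * ∫ a, hK (ρ * k) (γ a) ∂μ := by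
    intro k
    rw [← integral_const_mul]
    simp_rw [hK_mul_eq]
  simp_rw [e1] at h
  refine Eq.subst (motive := fun z => HasSum _ z) ?_ h
  refine integral_congr_ae ?_
  filter_upwards [hb] with a ha
  rw [tsum_mul_left, tsum_geometric_of_norm_lt_one (lt_of_le_of_lt ha (by norm_num)), mK]
  congr 1
  rw [Complex.exp_neg]
  have hz := Complex.exp_ne_zero (ρ * γ a)
  rw [show (1 : ℂ) - -x * (Complex.exp (ρ * γ a))⁻¹ =
    (Complex.exp (ρ * γ a) + x) / Complex.exp (ρ * γ a) by field_simp; ring, inv_div]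

lemma mK_hankC_hasSum (ρ x c : ℝ) (hρ : 0 < ρ) (hx : 0 < x) (hc : x * exp (-(ρ * c)) ≤ 1 / 2) :
    HasSum (fun k : ℕ => ((-x : ℝ) : ℂ) ^ k * hankC (hK (ρ * k)) c) (hankC (mK ρ x) c) := by
  have h1 := mK_hasSum (volume.restrict (Ioi c)) (fun u : ℝ => (u : ℂ) + (π : ℝ) * Complex.I)
    (by fun_prop) ρ x c hρ hx hc
    ((ae_restrict_iff' measurableSet_Ioi).2 (Eventually.of_forall fun u hu => by
      simpa using (mem_Ioi.1 hu).le)) (hK_int 0 c)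
  have h2 := mK_hasSum (volume.restrict (Ioi c))
    (fun u : ℝ => (u : ℂ) + ((-π : ℝ) : ℂ) * Complex.I)
    (by fun_prop) ρ x c hρ hx hc
    ((ae_restrict_iff' measurableSet_Ioi).2 (Eventually.of_forall fun u hu => by
      simpa using (mem_Ioi.1 hu).le)) (hK_int' 0 c)
  have h3 := mK_hasSum (volume.restrict (Ioc (-π) π)) (fun y : ℝ => (c : ℂ) + (y : ℂ) * Complex.I)
    (by fun_prop) ρ x c hρ hx hc (Eventually.of_forall fun u => by simp)
    (by
      have : Continuous (fun y : ℝ => hK 0 ((c : ℂ) + (y : ℂ) * Complex.I)) := by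
        unfold hK; fun_prop
      exact (this.integrableOn_Icc).mono_set Ioc_subset_Icc_self)
  have h := (h1.sub h2).add (h3.mul_left Complex.I)
  unfold hankC
  simp_rw [intervalIntegral.integral_of_le (show -π ≤ π by linarith [pi_pos])]
  refine h.congr_fun ?_
  intro k
  ring

lemma exp_add_ne (ρ x : ℝ) (hρ : 0 < ρ) (hρ1 : ρ < 1) (hx : 0 < x) (w : ℂ) (hw : |w.im| ≤ π) :
    Complex.exp (ρ * w) + x ≠ 0 := by
  intro h
  have him := congrArg Complex.im h
  have hre := congrArg Complex.re h
  simp [Complex.exp_re, Complex.exp_im] at him hre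
  have hw' := abs_le.1 hw
  have h0 : ρ * w.im = 0 := by
    by_contra hne
    rcases lt_or_gt_of_ne hne with h1 | h1
    · have := sin_neg_of_neg_of_neg_pi_lt h1 (by nlinarith [pi_pos])
      linarith
    · have := sin_pos_of_pos_of_lt_pi h1 (by nlinarith [pi_pos])
      linarith
  rw [h0, cos_zero] at hre
  have := exp_pos (ρ * w.re)
  linarith

lemma mK_diff (ρ x : ℝ) (hρ : 0 < ρ) (hρ1 : ρ < 1) (hx : 0 < x) (w : ℂ) (hw : |w.im| ≤ π) :
    DifferentiableAt ℂ (mK ρ x) w := by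
  unfold mK
  refine (hK_diff 0 w).differentiableAt.mul (DifferentiableAt.div ?_ ?_
    (exp_add_ne ρ x hρ hρ1 hx w hw)) <;> fun_prop

/-- `exp (ρ (u ± π i))` -/
lemma exp_rho_ray (ρ u θ : ℝ) : Complex.exp (ρ * ((u : ℂ) + (θ : ℂ) * Complex.I)) =
    (exp (ρ * u) * cos (θ * ρ) : ℝ) + (exp (ρ * u) * sin (θ * ρ) : ℝ) * Complex.I := by
  rw [show (ρ : ℂ) * ((u : ℂ) + (θ : ℂ) * Complex.I) =
    ((ρ * u : ℝ) : ℂ) + ((θ * ρ : ℝ) : ℂ) * Complex.I by push_cast; ring,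
    Complex.exp_add, Complex.exp_mul_I]
  push_cast; ring

/-- The denominators are positive. -/
lemma quad_pos (φ : ℝ) (h0 : 0 < φ) (h1 : φ < π) (a b : ℝ) (hb : 0 < b) :
    0 < a ^ 2 + 2 * b * a * cos φ + b ^ 2 := by
  have hs := sin_pos_of_pos_of_lt_pi h0 h1
  have := sin_sq_add_cos_sq φ
  have h2 : a ^ 2 + 2 * b * a * cos φ + b ^ 2 = (a + b * cos φ) ^ 2 + (b * sin φ) ^ 2 := by
    linear_combination (-b ^ 2) * this
  rw [h2]; positivity

lemma frac_ray (ρ x u θ : ℝ) (hne : exp (ρ * u) ^ 2 + 2 * x * exp (ρ * u) * cos (θ * ρ) + x ^ 2 ≠ 0) :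
    Complex.exp (ρ * ((u : ℂ) + (θ : ℂ) * Complex.I)) /
      (Complex.exp (ρ * ((u : ℂ) + (θ : ℂ) * Complex.I)) + x) =
    (((exp (ρ * u) ^ 2 + x * exp (ρ * u) * cos (θ * ρ)) : ℝ) +
      (x * exp (ρ * u) * sin (θ * ρ) : ℝ) * Complex.I) /
      ((exp (ρ * u) ^ 2 + 2 * x * exp (ρ * u) * cos (θ * ρ) + x ^ 2 : ℝ) : ℂ) := by
  have hI := Complex.I_mul_I
  have hsc : ((sin (θ * ρ) : ℝ) : ℂ) ^ 2 + ((cos (θ * ρ) : ℝ) : ℂ) ^ 2 = 1 := by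
    exact_mod_cast sin_sq_add_cos_sq (θ * ρ)
  have hprod : (Complex.exp (ρ * ((u : ℂ) + (θ : ℂ) * Complex.I)) + x) *
      ((exp (ρ * u) * cos (θ * ρ) + x : ℝ) - (exp (ρ * u) * sin (θ * ρ) : ℝ) * Complex.I) =
      ((exp (ρ * u) ^ 2 + 2 * x * exp (ρ * u) * cos (θ * ρ) + x ^ 2 : ℝ) : ℂ) := by
    rw [exp_rho_ray]
    push_cast at hsc ⊢
    linear_combination (Complex.exp (ρ * u)) ^ 2 * hsc
      - (Complex.exp (ρ * u) * Complex.sin (θ * ρ)) ^ 2 * hI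
  have hne' : ((exp (ρ * u) ^ 2 + 2 * x * exp (ρ * u) * cos (θ * ρ) + x ^ 2 : ℝ) : ℂ) ≠ 0 := by
    exact_mod_cast hne
  have hz : Complex.exp (ρ * ((u : ℂ) + (θ : ℂ) * Complex.I)) + x ≠ 0 := by
    intro h; rw [h, zero_mul] at hprod; exact hne' hprod.symm
  rw [div_eq_div_iff hz hne', ← hprod]
  set Z := Complex.exp (ρ * ((u : ℂ) + (θ : ℂ) * Complex.I)) + x with hZ
  have hZ' : Complex.exp (ρ * ((u : ℂ) + (θ : ℂ) * Complex.I)) *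
      ((exp (ρ * u) * cos (θ * ρ) + x : ℝ) - (exp (ρ * u) * sin (θ * ρ) : ℝ) * Complex.I) =
      (((exp (ρ * u) ^ 2 + x * exp (ρ * u) * cos (θ * ρ)) : ℝ) +
      (x * exp (ρ * u) * sin (θ * ρ) : ℝ) * Complex.I) := by
    rw [exp_rho_ray]
    push_cast at hsc ⊢
    linear_combination (Complex.exp (ρ * u)) ^ 2 * hsc
      - (Complex.exp (ρ * u) * Complex.sin (θ * ρ)) ^ 2 * hI
  linear_combination Z * hZ'

lemma mK_ray_int (ρ x θ : ℝ) (hρ : 0 < ρ) (hρ1 : ρ < 1) (hx : 0 < x) (hθ : θ = π ∨ θ = -π) :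
    Integrable (fun u : ℝ => mK ρ x ((u : ℂ) + (θ : ℂ) * Complex.I)) := by
  have hs : 0 < sin (π * ρ) := sin_pos_of_pos_of_lt_pi (by positivity) (by nlinarith [pi_pos])
  have hi := ((gamma_exp ρ hρ).1).const_mul (1 / (x * sin (π * ρ)))
  refine hi.mono' ?_ ?_
  · apply Continuous.aestronglyMeasurable
    rw [continuous_iff_continuousAt]
    intro u
    have h1 := (mK_diff ρ x hρ hρ1 hx ((u : ℂ) + (θ : ℂ) * Complex.I) (by
      rcases hθ with h | h <;> simp [h, abs_of_pos pi_pos])).continuousAt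
    exact ContinuousAt.comp (f := fun u : ℝ => (u : ℂ) + (θ : ℂ) * Complex.I) h1 (by fun_prop)
  · filter_upwards with u
    have hk : ‖hK 0 ((u : ℂ) + (θ : ℂ) * Complex.I)‖ = exp (-exp u) := by
      rw [hK_norm]
      rcases hθ with h | h <;> simp [h]
    have hcs : cos (θ * ρ) = cos (π * ρ) := by
      rcases hθ with h | h <;> simp [h]
    have hss : sin (θ * ρ) ^ 2 = sin (π * ρ) ^ 2 := by
      rcases hθ with h | h <;> simp [h]
    have hn : ‖Complex.exp (ρ * ((u : ℂ) + (θ : ℂ) * Complex.I))‖ = exp (ρ * u) := by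
      simp [Complex.norm_exp]
    have hd : x * sin (π * ρ) ≤ ‖Complex.exp (ρ * ((u : ℂ) + (θ : ℂ) * Complex.I)) + x‖ := by
      apply abs_le_of_sq_le_sq' _ (norm_nonneg _) |>.2
      rw [Complex.sq_norm, Complex.normSq_apply, exp_rho_ray]
      simp only [Complex.add_re, Complex.add_im, Complex.mul_re, Complex.mul_im,
        Complex.ofReal_re, Complex.ofReal_im, Complex.I_re, Complex.I_im]
      rw [hcs]
      have h1 := sin_sq_add_cos_sq (π * ρ)
      rw [← sub_nonneg]
      refine le_of_le_of_eq (sq_nonneg (exp (ρ * u) + x * cos (π * ρ))) ?_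
      linear_combination (-exp (ρ * u) ^ 2) * hss + (x ^ 2 - exp (ρ * u) ^ 2) * h1
    rw [mK, norm_mul, norm_div, hk, hn, exp_add]
    rw [show 1 / (x * sin (π * ρ)) * (exp (-exp u) * exp (ρ * u)) =
      exp (-exp u) * (exp (ρ * u) / (x * sin (π * ρ))) by ring]
    gcongr

lemma mK_vert (ρ x : ℝ) (hρ : 0 < ρ) (hx : 0 < x) :
    ∀ᶠ c : ℝ in atBot, ∀ y : ℝ, ‖mK ρ x ((c : ℂ) + (y : ℂ) * Complex.I)‖ ≤
      2 / x * exp (exp c - (-ρ) * c) := by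
  have ht : Tendsto (fun c : ℝ => exp (ρ * c)) atBot (𝓝 0) :=
    tendsto_exp_atBot.comp (tendsto_id.const_mul_atBot hρ)
  filter_upwards [ht.eventually_le_const (show 0 < x / 2 by positivity)] with c hc y
  have hk := hK_norm_le 0 ((c : ℂ) + (y : ℂ) * Complex.I)
  have hn : ‖Complex.exp (ρ * ((c : ℂ) + (y : ℂ) * Complex.I))‖ = exp (ρ * c) := by
    simp [Complex.norm_exp]
  have hd : x / 2 ≤ ‖Complex.exp (ρ * ((c : ℂ) + (y : ℂ) * Complex.I)) + x‖ := by
    have h1 := norm_sub_norm_le (x : ℂ) (-Complex.exp (ρ * ((c : ℂ) + (y : ℂ) * Complex.I)))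
    rw [norm_neg, hn, Complex.norm_real, norm_of_nonneg hx.le, sub_neg_eq_add, add_comm (x : ℂ)] at h1
    linarith
  rw [mK, norm_mul, norm_div, hn]
  simp only [Complex.add_re, Complex.ofReal_re, Complex.mul_re, Complex.I_re, mul_zero,
    Complex.ofReal_im, Complex.I_im, mul_one, sub_zero, add_zero, zero_mul] at hk
  calc ‖hK 0 ((c : ℂ) + (y : ℂ) * Complex.I)‖ * (exp (ρ * c) / _)
      ≤ exp (exp c) * (exp (ρ * c) / (x / 2)) := by gcongr
    _ = _ := by rw [show exp c - -ρ * c = exp c + ρ * c by ring, exp_add]; field_simp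

/-- Integrand of the real representation. -/
noncomputable def mR (ρ x u : ℝ) : ℝ :=
  exp (-exp u) * (x * exp (ρ * u) * sin (π * ρ) /
    (π * (exp (ρ * u) ^ 2 + 2 * x * exp (ρ * u) * cos (π * ρ) + x ^ 2)))

lemma mR_eq (ρ x u : ℝ) (hρ : 0 < ρ) (hρ1 : ρ < 1) (hx : 0 < x) :
    mK ρ x ((u : ℂ) + (π : ℝ) * Complex.I) - mK ρ x ((u : ℂ) + ((-π : ℝ) : ℂ) * Complex.I) =
    2 * π * Complex.I * (mR ρ x u : ℝ) := by
  have hq := quad_pos (π * ρ) (by positivity) (by nlinarith [pi_pos]) (exp (ρ * u)) x hx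
  have hk : hK 0 ((u : ℂ) + (π : ℝ) * Complex.I) = (exp (-exp u) : ℝ) := by
    rw [hK_ray]; simp
  have hk' : hK 0 ((u : ℂ) + ((-π : ℝ) : ℂ) * Complex.I) = (exp (-exp u) : ℝ) := by
    rw [hK_ray']; simp
  unfold mK
  rw [hk, hk', frac_ray ρ x u π hq.ne', frac_ray ρ x u (-π) (by rw [neg_mul, cos_neg]; exact hq.ne')]
  unfold mR
  rw [neg_mul, cos_neg, sin_neg]
  generalize hD : exp (ρ * u) ^ 2 + 2 * x * exp (ρ * u) * cos (π * ρ) + x ^ 2 = D at *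
  have hD' : (D : ℂ) ≠ 0 := by exact_mod_cast hq.ne'
  have hpi : (π : ℂ) ≠ 0 := by exact_mod_cast pi_ne_zero
  simp only [Complex.ofReal_mul, Complex.ofReal_div, Complex.ofReal_neg, Complex.ofReal_add]
  field_simp
  ring

lemma ml_real (ρ x : ℝ) (hρ : 0 < ρ) (hρ1 : ρ < 1) (hx : 0 < x) :
    Integrable (mR ρ x) ∧ mittagLeffler ρ (-x) = ∫ u : ℝ, mR ρ x u := by
  have h1 := mK_ray_int ρ x π hρ hρ1 hx (Or.inl rfl)
  have h2 := mK_ray_int ρ x (-π) hρ hρ1 hx (Or.inr rfl)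
  have hpi : (2 * π * Complex.I : ℂ) ≠ 0 := Complex.two_pi_I_ne_zero
  have hI : Integrable (mR ρ x) := by
    have h3 := ((h1.sub h2).const_mul (2 * π * Complex.I : ℂ)⁻¹).re
    refine h3.congr ?_
    filter_upwards with u
    simp only [Pi.sub_apply]
    rw [mR_eq ρ x u hρ hρ1 hx, inv_mul_cancel_left₀ hpi]
    simp
  refine ⟨hI, ?_⟩
  set c := log (2 * x) / ρ with hc
  have hcx : x * exp (-(ρ * c)) ≤ 1 / 2 := by
    rw [hc, mul_div_cancel₀ _ hρ.ne', exp_neg, exp_log (by positivity)]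
    apply le_of_eq; field_simp
  have hb : Tendsto (fun c : ℝ => 2 / x * exp (exp c - (-ρ) * c)) atBot (𝓝 0) := by
    simpa using (tendsto_bd (-ρ) (by linarith)).const_mul (2 / x)
  have hcol := hankC_collapse (mK ρ x) (mK_diff ρ x hρ hρ1 hx) h1 h2 _ hb (mK_vert ρ x hρ hx) c
  rw [← integral_sub h1 h2] at hcol
  simp_rw [mR_eq ρ x _ hρ hρ1 hx] at hcol
  rw [integral_const_mul, integral_complex_ofReal] at hcol
  have hs := mK_hankC_hasSum ρ x c hρ hx hcx
  rw [hcol] at hs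
  have hs2 := hs.mul_left (2 * π * Complex.I : ℂ)⁻¹
  rw [inv_mul_cancel_left₀ hpi] at hs2
  have hs3 : HasSum (fun k : ℕ => (((-x) ^ k / Gamma (ρ * k + 1) : ℝ) : ℂ))
      ((∫ u : ℝ, mR ρ x u : ℝ) : ℂ) := by
    refine hs2.congr_fun fun k => ?_
    rw [hankel (ρ * k) c (by have : 0 ≤ ρ * k := by positivity
                             linarith)]
    rw [add_comm 1 (ρ * k)]
    push_cast
    field_simp
  exact (Complex.hasSum_ofReal.1 hs3).tsum_eq

/-- The probability density on `(0,∞)`, symmetric under `q ↦ 1/q`. -/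
noncomputable def dens (φ q : ℝ) : ℝ := sin φ / (φ * (1 + 2 * q * cos φ + q ^ 2))

lemma ml_q (ρ x : ℝ) (hρ : 0 < ρ) (hρ1 : ρ < 1) (hx : 0 < x) :
    IntegrableOn (fun q : ℝ => exp (-(x * q) ^ (1 / ρ)) * dens (π * ρ) q) (Ioi 0) ∧
    mittagLeffler ρ (-x) = ∫ q in Ioi 0, exp (-(x * q) ^ (1 / ρ)) * dens (π * ρ) q := by
  obtain ⟨hI, hE⟩ := ml_real ρ x hρ hρ1 hx
  have him : (fun q : ℝ => log (x * q) / ρ) '' Ioi 0 = univ := by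
    rw [eq_univ_iff_forall]
    intro u
    refine ⟨exp (ρ * u) / x, by simp; positivity, ?_⟩
    simp only
    rw [mul_div_cancel₀ _ hx.ne', log_exp, mul_div_cancel_left₀ _ hρ.ne']
  have hd : ∀ q ∈ Ioi (0 : ℝ), HasDerivWithinAt (fun q : ℝ => log (x * q) / ρ) (1 / (ρ * q)) (Ioi 0) q := by
    intro q hq
    have hq' : 0 < q := hq
    have h1 : HasDerivAt (fun q : ℝ => x * q) (x * 1) q := (hasDerivAt_id q).const_mul x
    have h2 := (h1.log (by positivity)).div_const ρ
    refine (h2.congr_deriv ?_).hasDerivWithinAt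
    field_simp
  have hinj : InjOn (fun q : ℝ => log (x * q) / ρ) (Ioi 0) := by
    intro a ha b hb hab
    have ha' : 0 < a := ha
    have hb' : 0 < b := hb
    simp only at hab
    have h3 : log (x * a) = log (x * b) := by field_simp at hab; exact hab
    have h4 := log_injOn_pos (mul_pos hx ha') (mul_pos hx hb') h3
    exact mul_left_cancel₀ hx.ne' h4
  have hfun : ∀ q ∈ Ioi (0 : ℝ), |1 / (ρ * q)| • mR ρ x (log (x * q) / ρ) =
      exp (-(x * q) ^ (1 / ρ)) * dens (π * ρ) q := by
    intro q hq
    have hq' : 0 < q := hq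
    have hxq : 0 < x * q := by positivity
    have hD := quad_pos (π * ρ) (by positivity) (by nlinarith [pi_pos]) q 1 one_pos
    have hD2 : 0 < 1 + 2 * q * cos (π * ρ) + q ^ 2 := by linarith
    rw [abs_of_pos (by positivity), smul_eq_mul, mR, mul_div_cancel₀ _ hρ.ne', exp_log hxq,
      rpow_def_of_pos hxq, dens, mul_one_div]
    rw [show (x * q) ^ 2 + 2 * x * (x * q) * cos (π * ρ) + x ^ 2 =
      x ^ 2 * (1 + 2 * q * cos (π * ρ) + q ^ 2) by ring]
    generalize (1 + 2 * q * cos (π * ρ) + q ^ 2) = D at hD2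
    field_simp
  constructor
  · have := (integrableOn_image_iff_integrableOn_abs_deriv_smul measurableSet_Ioi hd hinj
      (mR ρ x)).1 (by rw [him, integrableOn_univ]; exact hI)
    exact this.congr_fun hfun measurableSet_Ioi
  · rw [hE, ← setIntegral_univ, ← him,
      integral_image_eq_integral_abs_deriv_smul measurableSet_Ioi hd hinj]
    exact setIntegral_congr_fun measurableSet_Ioi hfun

lemma ml_rep (ρ x : ℝ) (hρ : 0 < ρ) (hρ1 : ρ < 1) (hx : 0 < x) :
    mittagLeffler ρ (-x) = ∫ q in Ioo 0 1,
      (exp (-(x * q) ^ (1 / ρ)) + exp (-(x / q) ^ (1 / ρ))) * dens (π * ρ) q := by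
  obtain ⟨hI, hE⟩ := ml_q ρ x hρ hρ1 hx
  have him : (fun q : ℝ => q⁻¹) '' Ioo 0 1 = Ioi 1 := by
    ext y
    simp only [mem_image, mem_Ioo, mem_Ioi]
    constructor
    · rintro ⟨q, ⟨h0, h1⟩, rfl⟩
      exact (one_lt_inv₀ h0).2 h1
    · intro hy
      exact ⟨y⁻¹, ⟨by positivity, inv_lt_one_of_one_lt₀ hy⟩, inv_inv y⟩
  have hd : ∀ q ∈ Ioo (0 : ℝ) 1, HasDerivWithinAt (fun q : ℝ => q⁻¹) (-(q ^ 2)⁻¹) (Ioo 0 1) q :=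
    fun q hq => (hasDerivAt_inv hq.1.ne').hasDerivWithinAt
  have hinj : InjOn (fun q : ℝ => q⁻¹) (Ioo 0 1) := inv_injective.injOn
  have hfun : ∀ q ∈ Ioo (0 : ℝ) 1, |-(q ^ 2)⁻¹| • (exp (-(x * q⁻¹) ^ (1 / ρ)) * dens (π * ρ) q⁻¹) =
      exp (-(x / q) ^ (1 / ρ)) * dens (π * ρ) q := by
    intro q hq
    have hq' : 0 < q := hq.1
    have hD := quad_pos (π * ρ) (by positivity) (by nlinarith [pi_pos]) q 1 one_pos
    have hD2 : 0 < 1 + 2 * q * cos (π * ρ) + q ^ 2 := by linarith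
    rw [abs_neg, abs_of_pos (by positivity), smul_eq_mul, div_eq_mul_inv, dens, dens]
    rw [show 1 + 2 * q⁻¹ * cos (π * ρ) + q⁻¹ ^ 2 = (1 + 2 * q * cos (π * ρ) + q ^ 2) / q ^ 2 by
      field_simp; ring]
    generalize (1 + 2 * q * cos (π * ρ) + q ^ 2) = D at hD2
    field_simp
  have hI1 := hI.mono_set (show Ioo (0 : ℝ) 1 ⊆ Ioi 0 from fun q hq => hq.1)
  have hI2 := hI.mono_set (show Ioi (1 : ℝ) ⊆ Ioi 0 from Ioi_subset_Ioi zero_le_one)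
  have hI3 := ((integrableOn_image_iff_integrableOn_abs_deriv_smul measurableSet_Ioo hd hinj
      (fun q : ℝ => exp (-(x * q) ^ (1 / ρ)) * dens (π * ρ) q)).1 (by rw [him]; exact hI2)).congr_fun
      hfun measurableSet_Ioo
  have e2 := integral_image_eq_integral_abs_deriv_smul measurableSet_Ioo hd hinj
      (fun q : ℝ => exp (-(x * q) ^ (1 / ρ)) * dens (π * ρ) q)
  rw [him, setIntegral_congr_fun measurableSet_Ioo hfun] at e2
  rw [hE, ← Ioc_union_Ioi_eq_Ioi (zero_le_one' ℝ), setIntegral_union (by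
      rw [Set.disjoint_left]; intro a ha hb; exact absurd ha.2 (not_le.2 hb)) measurableSet_Ioi
      ((integrableOn_Ioc_iff_integrableOn_Ioo).2 hI1) hI2, e2, integral_Ioc_eq_integral_Ioo,
      ← integral_add hI1 hI3]
  simp_rw [add_mul]

/-! ### Part 3: real analysis -/

lemma densD_pos (φ q : ℝ) (h0 : 0 < φ) (h1 : φ < π) : 0 < 1 + 2 * q * cos φ + q ^ 2 := by
  have := quad_pos φ h0 h1 q 1 one_pos
  linarith

lemma dens_pos (φ q : ℝ) (h0 : 0 < φ) (h1 : φ < π) : 0 < dens φ q := by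
  have := densD_pos φ q h0 h1
  have := sin_pos_of_pos_of_lt_pi h0 h1
  unfold dens; positivity

lemma dens_cont (φ : ℝ) (h0 : 0 < φ) (h1 : φ < π) : Continuous (dens φ) := by
  unfold dens
  refine Continuous.div (by fun_prop) (by fun_prop) fun q => ?_
  exact (mul_pos h0 (densD_pos φ q h0 h1)).ne'

lemma dens_int (φ : ℝ) (h0 : 0 < φ) (h1 : φ < π) : IntegrableOn (dens φ) (Ioo 0 1) :=
  ((dens_cont φ h0 h1).integrableOn_Icc).mono_set Ioo_subset_Icc_self

lemma dens_integral (φ : ℝ) (h0 : 0 < φ) (h1 : φ < π) : ∫ q in Ioo 0 1, dens φ q = 1 / 2 := by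
  have hs := sin_pos_of_pos_of_lt_pi h0 h1
  have hd : ∀ q : ℝ, HasDerivAt (fun q : ℝ => arctan ((q + cos φ) / sin φ) / φ) (dens φ q) q := by
    intro q
    have ha : HasDerivAt (fun q : ℝ => (q + cos φ) / sin φ) (1 / sin φ) q :=
      ((hasDerivAt_id q).add_const _).div_const _
    have hb := ha.arctan.div_const φ
    refine hb.congr_deriv ?_
    have hD := densD_pos φ q h0 h1
    have hsc := sin_sq_add_cos_sq φ
    have hE : 1 + ((q + cos φ) / sin φ) ^ 2 = (1 + 2 * q * cos φ + q ^ 2) / sin φ ^ 2 := by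
      field_simp
      linear_combination hsc
    rw [hE, dens]
    generalize (1 + 2 * q * cos φ + q ^ 2) = D at hD
    field_simp
  rw [← integral_Ioc_eq_integral_Ioo, ← intervalIntegral.integral_of_le zero_le_one,
    intervalIntegral.integral_eq_sub_of_hasDerivAt (fun q _ => hd q)
      ((dens_cont φ h0 h1).intervalIntegrable _ _)]
  have e1 : arctan ((1 + cos φ) / sin φ) = π / 2 - φ / 2 := by
    rw [← arctan_tan (x := π / 2 - φ / 2) (by linarith) (by linarith), tan_pi_div_two_sub,
      tan_eq_sin_div_cos, inv_div]
    congr 1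
    have hs2 := sin_pos_of_pos_of_lt_pi (x := φ / 2) (by linarith) (by linarith)
    have h2 : sin φ = 2 * sin (φ / 2) * cos (φ / 2) := by rw [← sin_two_mul]; congr 1; ring
    have h3 : cos φ = 2 * cos (φ / 2) ^ 2 - 1 := by rw [← cos_two_mul]; congr 1; ring
    rw [div_eq_div_iff hs.ne' hs2.ne', h2, h3]
    ring
  have e0 : arctan ((0 + cos φ) / sin φ) = π / 2 - φ := by
    rw [← arctan_tan (x := π / 2 - φ) (by linarith) (by linarith), tan_pi_div_two_sub,
      tan_eq_sin_div_cos, inv_div, zero_add]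
  rw [e1, e0]
  field_simp
  ring

/-! #### sinc estimates -/

lemma sin_sub_ge (φ : ℝ) (h0 : 0 < φ) (h1 : φ < π) : φ ^ 3 / 32 ≤ sin φ - φ * cos φ := by
  rcases le_total φ (π / 2) with h | h
  · have hm : MonotoneOn (fun y : ℝ => sin y - y * cos y - y ^ 3 / 32) (Icc 0 (π / 2)) := by
      have hd : ∀ y : ℝ, HasDerivAt (fun y : ℝ => sin y - y * cos y - y ^ 3 / 32)
          (y * sin y - 3 * y ^ 2 / 32) y := by
        intro y
        have := ((hasDerivAt_sin y).sub ((hasDerivAt_id y).mul (hasDerivAt_cos y))).sub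
          ((hasDerivAt_pow 3 y).div_const 32)
        refine this.congr_deriv ?_
        simp only [id]
        push_cast
        ring
      refine monotoneOn_of_deriv_nonneg (convex_Icc _ _)
        (fun y _ => (hd y).continuousAt.continuousWithinAt)
        (fun y _ => (hd y).differentiableAt.differentiableWithinAt) ?_
      intro y hy
      rw [interior_Icc] at hy
      rw [(hd y).deriv]
      have hj := mul_le_sin hy.1.le hy.2.le
      have hp : 1 / 4 ≤ 2 / π := by
        rw [div_le_div_iff₀ (by norm_num) pi_pos]; linarith [pi_lt_four]
      have : 1 / 4 * y ≤ sin y := le_trans (by gcongr; exact hy.1.le) hj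
      nlinarith [hy.1]
    have := hm (left_mem_Icc.2 (by positivity)) ⟨h0.le, h⟩ h0.le
    simp only [sin_zero] at this
    norm_num at this
    linarith
  · have hc : cos φ ≤ 0 := cos_nonpos_of_pi_div_two_le_of_le h (by linarith)
    have hs := sin_pos_of_pos_of_lt_pi h0 h1
    have hsc := sin_sq_add_cos_sq φ
    have hp := pi_gt_three
    have h3 : 1 ≤ sin φ - cos φ := by nlinarith
    have h4 : φ ^ 3 ≤ 32 := by
      have h5 : φ ≤ 3.15 := by linarith [pi_lt_d2]
      calc φ ^ 3 ≤ 3.15 ^ 3 := by gcongr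
        _ ≤ 32 := by norm_num
    nlinarith

lemma sinc_diff (a b : ℝ) (h0 : 0 < a) (hab : a < b) (hb : b < π) :
    (b ^ 2 - a ^ 2) / 64 ≤ sin a / a - sin b / b := by
  have hm : AntitoneOn (fun y : ℝ => sin y / y + y ^ 2 / 64) (Ioo 0 π) := by
    have hd : ∀ y ∈ Ioo 0 π, HasDerivAt (fun y : ℝ => sin y / y + y ^ 2 / 64)
        ((cos y * y - sin y * 1) / y ^ 2 + (2 * y) / 64) y := by
      intro y hy
      have := ((hasDerivAt_sin y).div (hasDerivAt_id y) hy.1.ne').add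
          ((hasDerivAt_pow 2 y).div_const 64)
      refine this.congr_deriv ?_
      simp
    refine antitoneOn_of_deriv_nonpos (convex_Ioo _ _)
        (fun y hy => (hd y hy).continuousAt.continuousWithinAt)
        (fun y hy => ((hd y (interior_subset hy)).differentiableAt.differentiableWithinAt)) ?_
    intro y hy
    have hy' := interior_subset hy
    rw [(hd y hy').deriv]
    have := sin_sub_ge y hy'.1 hy'.2
    have hy0 := hy'.1
    rw [div_add' _ _ _ (by positivity)]
    apply div_nonpos_of_nonpos_of_nonneg _ (by positivity)
    linarith
  have := hm ⟨h0, by linarith⟩ ⟨by linarith, hb⟩ hab.le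
  simp only at this
  linarith

lemma cos_diff (a b : ℝ) (h0 : 0 < a) (hab : a < b) (hb : b < π) :
    cos a - cos b ≤ (b ^ 2 - a ^ 2) / 2 := by
  rw [cos_sub_cos, show (a - b) / 2 = -((b - a) / 2) by ring, sin_neg]
  have h1 := sin_le (x := (a + b) / 2) (by linarith)
  have h2 := sin_le (x := (b - a) / 2) (by linarith)
  have h3 := sin_pos_of_pos_of_lt_pi (x := (b - a) / 2) (by linarith) (by linarith)
  have h4 := mul_le_mul h1 h2 h3.le (by linarith)
  nlinarith

lemma dens_sub (a b q : ℝ) (h0 : 0 < a) (hab : a < b) (hb : b < π) :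
    dens a q - dens b q = ((sin a / a - sin b / b) * (1 + q ^ 2) +
      2 * q * (sin a / a * cos b - sin b / b * cos a)) /
      ((1 + 2 * q * cos a + q ^ 2) * (1 + 2 * q * cos b + q ^ 2)) := by
  have hA := densD_pos a q h0 (by linarith)
  have hB := densD_pos b q (by linarith) hb
  have hb0 : 0 < b := by linarith
  unfold dens
  rw [← div_div, ← div_div, div_sub_div _ _ hA.ne' hB.ne']
  congr 1
  ring

lemma dens_sub_ge (a b q : ℝ) (h0 : 0 < a) (hab : a < b) (hb : b < π) (hq0 : 0 < q)
    (hq : q ≤ 1 / 200) : (b ^ 2 - a ^ 2) / 200 ≤ dens a q - dens b q := by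
  rw [dens_sub a b q h0 hab hb]
  have hA := densD_pos a q h0 (by linarith)
  have hB := densD_pos b q (by linarith) hb
  have hb0 : 0 < b := by linarith
  have hP : 0 < b ^ 2 - a ^ 2 := by nlinarith
  have h1 := sinc_diff a b h0 hab hb
  have h2 := cos_diff a b h0 hab hb
  have h3 : sin b / b ≤ 1 := by rw [div_le_one hb0]; exact sin_le hb0.le
  have h4 : 0 < sin b / b := div_pos (sin_pos_of_pos_of_lt_pi hb0 hb) hb0
  have hA' : 1 + 2 * q * cos a + q ^ 2 ≤ 1.02 := by
    nlinarith [cos_le_one a]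
  have hB' : 1 + 2 * q * cos b + q ^ 2 ≤ 1.02 := by
    nlinarith [cos_le_one b]
  have hB'' : 0.99 ≤ 1 + 2 * q * cos b + q ^ 2 := by
    nlinarith [neg_one_le_cos b]
  have hAB : (1 + 2 * q * cos a + q ^ 2) * (1 + 2 * q * cos b + q ^ 2) ≤ 1.05 := by
    calc _ ≤ (1.02 : ℝ) * 1.02 := by gcongr
      _ ≤ _ := by norm_num
  rw [le_div_iff₀ (by positivity)]
  have hnum : (sin a / a - sin b / b) * (1 + q ^ 2) +
      2 * q * (sin a / a * cos b - sin b / b * cos a) =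
      (sin a / a - sin b / b) * (1 + 2 * q * cos b + q ^ 2)
        - 2 * q * (sin b / b * (cos a - cos b)) := by ring
  rw [hnum]
  have g1 : (b ^ 2 - a ^ 2) / 64 * 0.99 ≤
      (sin a / a - sin b / b) * (1 + 2 * q * cos b + q ^ 2) := by
    gcongr
    linarith
  have g2 : sin b / b * (cos a - cos b) ≤ (b ^ 2 - a ^ 2) / 2 := by
    have hc : 0 < cos a - cos b := by
      have := cos_lt_cos_of_nonneg_of_le_pi h0.le hb.le hab
      linarith
    nlinarith
  have g3 : 2 * q * (sin b / b * (cos a - cos b)) ≤ 1 / 100 * ((b ^ 2 - a ^ 2) / 2) := by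
    calc _ ≤ 2 * q * ((b ^ 2 - a ^ 2) / 2) := by gcongr
      _ ≤ _ := by gcongr; linarith
  have g4 : (b ^ 2 - a ^ 2) / 200 * ((1 + 2 * q * cos a + q ^ 2) * (1 + 2 * q * cos b + q ^ 2))
      ≤ (b ^ 2 - a ^ 2) / 200 * 1.05 := by gcongr
  linarith

/-- single crossing -/
lemma dens_cross (a b : ℝ) (h0 : 0 < a) (hab : a < b) (hb : b < π) :
    ∃ s : ℝ, 1 / 200 ≤ s ∧ s ≤ 1 ∧ (∀ q ∈ Ioo (0 : ℝ) 1, q ≤ s → 0 ≤ dens a q - dens b q) ∧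
      (∀ q ∈ Ioo (0 : ℝ) 1, s ≤ q → dens a q - dens b q ≤ 0) := by
  by_cases hall : ∀ q ∈ Ioo (0 : ℝ) 1, 0 ≤ dens a q - dens b q
  · exact ⟨1, by norm_num, le_rfl, fun q hq _ => hall q hq,
      fun q hq h => absurd hq.2 (not_lt.2 h)⟩
  · push Not at hall
    obtain ⟨r, hr, hneg⟩ := hall
    have hP : 0 < b ^ 2 - a ^ 2 := by nlinarith
    have hδ := dens_sub_ge a b (1 / 200) h0 hab hb (by norm_num) le_rfl
    have hr2 : 1 / 200 ≤ r := by
      by_contra hlt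
      have := dens_sub_ge a b r h0 hab hb hr.1 (by linarith)
      linarith
    have hcont : ContinuousOn (fun q => dens a q - dens b q) (Icc (1 / 200) r) :=
      ((dens_cont a h0 (by linarith)).sub (dens_cont b (by linarith) hb)).continuousOn
    obtain ⟨s, hs, hs0⟩ := intermediate_value_Icc' hr2 hcont ⟨hneg.le, by linarith⟩
    simp only at hs0
    have hs01 : 0 < s := by linarith [hs.1]
    have hs1 : s ≤ 1 := by linarith [hs.2, hr.2]
    have hA : ∀ q, 0 < (1 + 2 * q * cos a + q ^ 2) * (1 + 2 * q * cos b + q ^ 2) := fun q =>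
      mul_pos (densD_pos a q h0 (by linarith)) (densD_pos b q (by linarith) hb)
    have hα : 0 < sin a / a - sin b / b := by
      have := sinc_diff a b h0 hab hb
      linarith
    rw [dens_sub a b s h0 hab hb, div_eq_zero_iff, or_iff_left (hA s).ne'] at hs0
    set α := sin a / a - sin b / b with hαd
    set β := sin a / a * cos b - sin b / b * cos a with hβd
    have key : ∀ q : ℝ, (α * (1 + q ^ 2) + 2 * q * β) * s = α * ((s - q) * (1 - s * q)) := by
      intro q
      linear_combination q * hs0
    refine ⟨s, hs.1, hs1, ?_, ?_⟩
    · intro q hq hqs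
      rw [dens_sub a b q h0 hab hb]
      apply div_nonneg _ (hA q).le
      have h2 : 0 ≤ (α * (1 + q ^ 2) + 2 * q * β) * s := by
        rw [key]
        have : 0 ≤ 1 - s * q := by nlinarith [hq.1, hq.2]
        have : 0 ≤ s - q := by linarith
        positivity
      exact nonneg_of_mul_nonneg_left h2 hs01
    · intro q hq hqs
      rw [dens_sub a b q h0 hab hb]
      apply div_nonpos_of_nonpos_of_nonneg _ (hA q).le
      have h2 : (α * (1 + q ^ 2) + 2 * q * β) * s ≤ 0 := by
        rw [key]
        have h3 : 0 ≤ 1 - s * q := by nlinarith [hq.1, hq.2]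
        have h4 : 0 ≤ (q - s) := by linarith
        have := mul_nonneg hα.le (mul_nonneg h4 h3)
        linarith
      by_contra hcon
      push Not at hcon
      have := mul_pos hcon hs01
      linarith

lemma gain (V : ℝ → ℝ) (a b η : ℝ) (h0 : 0 < a) (hab : a < b) (hb : b < π)
    (hV : AntitoneOn V (Ioc 0 1)) (hη0 : 0 < η) (hη : η < 1 / 200)
    (hI1 : IntegrableOn (fun q => V q * dens a q) (Ioo 0 1))
    (hI2 : IntegrableOn (fun q => V q * dens b q) (Ioo 0 1)) :
    η * ((V η - V (1 / 200)) * ((b ^ 2 - a ^ 2) / 200)) ≤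
      (∫ q in Ioo 0 1, V q * dens a q) - ∫ q in Ioo 0 1, V q * dens b q := by
  obtain ⟨s, hs, hs1, hp, hn⟩ := dens_cross a b h0 hab hb
  have ha1 : a < π := by linarith
  have hb0 : 0 < b := by linarith
  have hP : 0 < b ^ 2 - a ^ 2 := by nlinarith
  have hd1 := dens_int a h0 ha1
  have hd2 := dens_int b hb0 hb
  have e : (∫ q in Ioo 0 1, V q * dens a q) - ∫ q in Ioo 0 1, V q * dens b q =
      ∫ q in Ioo 0 1, (V q - V s) * (dens a q - dens b q) := by
    have h1 : ∀ q, (V q - V s) * (dens a q - dens b q) =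
      (V q * dens a q - V q * dens b q) - V s * (dens a q - dens b q) := fun q => by ring
    simp_rw [h1]
    have h2 : ∫ q in Ioo 0 1, V s * (dens a q - dens b q) = 0 := by
      rw [integral_const_mul, integral_sub hd1 hd2, dens_integral a h0 ha1,
        dens_integral b hb0 hb]
      simp
    have i3 : IntegrableOn (fun q => V q * dens a q - V q * dens b q) (Ioo 0 1) := hI1.sub hI2
    have i4 : IntegrableOn (fun q => V s * (dens a q - dens b q)) (Ioo 0 1) :=
      (hd1.sub hd2).const_mul _
    rw [integral_sub i3 i4, h2, sub_zero, integral_sub hI1 hI2]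
  rw [e]
  have hs0 : s ∈ Ioc (0 : ℝ) 1 := ⟨by linarith, hs1⟩
  have hInt : IntegrableOn (fun q => (V q - V s) * (dens a q - dens b q)) (Ioo 0 1) := by
    have h1 : ∀ q, (V q - V s) * (dens a q - dens b q) =
      (V q * dens a q - V q * dens b q) - V s * (dens a q - dens b q) := fun q => by ring
    simp_rw [h1]
    exact (hI1.sub hI2).sub ((hd1.sub hd2).const_mul _)
  have hnn : ∀ q ∈ Ioo (0 : ℝ) 1, 0 ≤ (V q - V s) * (dens a q - dens b q) := by
    intro q hq
    have hq' : q ∈ Ioc (0 : ℝ) 1 := ⟨hq.1, hq.2.le⟩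
    rcases le_total q s with h | h
    · exact mul_nonneg (by linarith [hV hq' hs0 h]) (hp q hq h)
    · exact mul_nonneg_of_nonpos_of_nonpos (by linarith [hV hs0 hq' h]) (hn q hq h)
  have hsub : Ioo (0 : ℝ) η ⊆ Ioo 0 1 := Ioo_subset_Ioo_right (by linarith)
  calc η * ((V η - V (1 / 200)) * ((b ^ 2 - a ^ 2) / 200))
      = ∫ q in Ioo 0 η, (V η - V (1 / 200)) * ((b ^ 2 - a ^ 2) / 200) := by
        rw [setIntegral_const]
        simp [hη0.le]
    _ ≤ ∫ q in Ioo 0 η, (V q - V s) * (dens a q - dens b q) := by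
        refine setIntegral_mono_on ?_ (hInt.mono_set hsub) measurableSet_Ioo ?_
        · exact integrableOn_const (by simp)
        · intro q hq
          have hd := dens_sub_ge a b q h0 hab hb hq.1 (by linarith [hq.2])
          have v1 : V η ≤ V q := hV ⟨hq.1, by linarith [hq.2]⟩ ⟨hη0, by linarith⟩ hq.2.le
          have v2 : V s ≤ V (1 / 200) := hV ⟨by norm_num, by norm_num⟩ hs0 hs
          have v3 : V (1 / 200) ≤ V η := hV ⟨hη0, by linarith⟩ ⟨by norm_num, by norm_num⟩ hη.le
          apply mul_le_mul (by linarith) hd (by linarith) (by linarith)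
    _ ≤ ∫ q in Ioo 0 1, (V q - V s) * (dens a q - dens b q) := by
        refine setIntegral_mono_set hInt ?_ (Eventually.of_forall hsub)
        exact (ae_restrict_iff' measurableSet_Ioo).2 (Eventually.of_forall hnn)

/-! ### Part 4: the comparison -/

/-- The kernel in the integral representation. -/
noncomputable def Vf (x ρ q : ℝ) : ℝ :=
  exp (-(x * q) ^ (1 / ρ)) + exp (-(x / q) ^ (1 / ρ))

lemma Vf_int (x ρ φ : ℝ) (hx : 0 < x) (h0 : 0 < φ) (h1 : φ < π) :
    IntegrableOn (fun q => Vf x ρ q * dens φ q) (Ioo 0 1) := by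
  refine Integrable.mono' ((dens_int φ h0 h1).const_mul 2) ?_ ?_
  · apply Measurable.aestronglyMeasurable
    have := (dens_cont φ h0 h1).measurable
    unfold Vf
    fun_prop
  · refine (ae_restrict_iff' measurableSet_Ioo).2 (Eventually.of_forall fun q hq => ?_)
    have hd := dens_pos φ q h0 h1
    have e1 : exp (-(x * q) ^ (1 / ρ)) ≤ 1 := by
      rw [exp_le_one_iff]
      have := rpow_nonneg (mul_pos hx hq.1).le (1 / ρ)
      linarith
    have e2 : exp (-(x / q) ^ (1 / ρ)) ≤ 1 := by
      rw [exp_le_one_iff]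
      have := rpow_nonneg (div_pos hx hq.1).le (1 / ρ)
      linarith
    have e3 := exp_pos (-(x * q) ^ (1 / ρ))
    have e4 := exp_pos (-(x / q) ^ (1 / ρ))
    rw [Real.norm_of_nonneg (by unfold Vf; positivity)]
    apply mul_le_mul_of_nonneg_right _ hd.le
    unfold Vf; linarith

lemma log_bd (p : ℝ) (h0 : 0 < p) (h1 : p < 1) : -2 * log p < 1 / p - p := by
  have hl : 0 < -log p := by linarith [log_neg h0 h1]
  have := Real.self_lt_sinh_iff.2 hl
  rw [sinh_eq, neg_neg, exp_neg, exp_log h0] at this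
  rw [one_div]; linarith

lemma v_anti (T : ℝ) (hT : 1 ≤ T) :
    StrictAntiOn (fun p => exp (-(T * p)) + exp (-(T / p))) (Ioc 0 1) := by
  have hder : ∀ p : ℝ, 0 < p → HasDerivAt (fun p => exp (-(T * p)) + exp (-(T / p)))
      (-T * exp (-(T * p)) + T / p ^ 2 * exp (-(T / p))) p := by
    intro p hp
    have h1 : HasDerivAt (fun p => exp (-(T * p))) (exp (-(T * p)) * (-(T * 1))) p :=
      (((hasDerivAt_id p).const_mul T).neg).exp
    have h2 : HasDerivAt (fun p => exp (-(T / p))) (exp (-(T / p)) * (-(T * (-(p ^ 2)⁻¹)))) p := by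
      have := (((hasDerivAt_inv hp.ne').const_mul T).neg).exp
      simpa [div_eq_mul_inv] using this
    refine (h1.add h2).congr_deriv ?_
    rw [div_eq_mul_inv]
    ring
  apply strictAntiOn_of_deriv_neg (convex_Ioc 0 1)
  · exact fun p hp => (hder p hp.1).continuousAt.continuousWithinAt
  · intro p hp
    rw [interior_Ioc] at hp
    rw [(hder p hp.1).deriv]
    have h := log_bd p hp.1 hp.2
    have hp2 : 0 < p ^ 2 := by have := hp.1; positivity
    have h3 : exp (-(T / p)) < p ^ 2 * exp (-(T * p)) := by
      have : p ^ 2 = exp (2 * log p) := by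
        rw [two_mul, exp_add, exp_log hp.1]; ring
      rw [this, ← exp_add, exp_lt_exp]
      have h5 : 0 < 1 / p - p := by
        have := log_neg hp.1 hp.2
        linarith
      have h4 : 1 / p - p ≤ T * (1 / p - p) := by nlinarith
      have h6 : T * (1 / p - p) = T / p - T * p := by ring
      linarith
    have h4 : T / p ^ 2 * exp (-(T / p)) < T / p ^ 2 * (p ^ 2 * exp (-(T * p))) :=
      mul_lt_mul_of_pos_left h3 (by positivity)
    have h5 : T / p ^ 2 * (p ^ 2 * exp (-(T * p))) = T * exp (-(T * p)) := by
      rw [← mul_assoc, div_mul_cancel₀ _ hp2.ne']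
    linarith

lemma Vf_eq (x ρ q : ℝ) (hx : 0 < x) (hq : 0 < q) :
    Vf x ρ q = exp (-(x ^ (1 / ρ) * q ^ (1 / ρ))) + exp (-(x ^ (1 / ρ) / q ^ (1 / ρ))) := by
  unfold Vf
  rw [mul_rpow hx.le hq.le, div_rpow hx.le hq.le]

lemma Vf_anti (x ρ : ℝ) (hx : 1 ≤ x) (hρ : 0 < ρ) : StrictAntiOn (Vf x ρ) (Ioc 0 1) := by
  intro q hq r hr hqr
  have hx0 : 0 < x := by linarith
  rw [Vf_eq x ρ q hx0 hq.1, Vf_eq x ρ r hx0 hr.1]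
  have hi : 0 < 1 / ρ := by positivity
  exact v_anti (x ^ (1 / ρ)) (one_le_rpow hx hi.le)
    ⟨rpow_pos_of_pos hq.1 _, rpow_le_one hq.1.le hq.2 hi.le⟩
    ⟨rpow_pos_of_pos hr.1 _, rpow_le_one hr.1.le hr.2 hi.le⟩
    (rpow_lt_rpow hq.1.le hqr hi)

lemma xpow (lam t ρ : ℝ) (hl : 0 < lam) (ht : 0 < t) (hρ : 0 < ρ) :
    (lam * t ^ ρ) ^ (1 / ρ) = t * lam ^ (1 / ρ) := by
  rw [mul_rpow hl.le (rpow_nonneg ht.le _), ← rpow_mul ht.le, mul_one_div_cancel hρ.ne', rpow_one,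
    mul_comm]

/-- The case `lam ≤ 1`: pointwise comparison. -/
lemma Vf_le (lam t ρ1 ρ2 q : ℝ) (hl : 0 < lam) (hl1 : lam ≤ 1) (ht : 0 < t) (h0 : 0 < ρ1)
    (h12 : ρ1 < ρ2) (hx : 1 ≤ lam * t ^ ρ1) (hq : q ∈ Ioo (0 : ℝ) 1) :
    Vf (lam * t ^ ρ2) ρ2 q ≤ Vf (lam * t ^ ρ1) ρ1 q := by
  have h2 : 0 < ρ2 := by linarith
  have hs : 1 / ρ2 ≤ 1 / ρ1 := one_div_le_one_div_of_le h0 h12.le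
  rw [Vf_eq _ ρ1 q (by positivity) hq.1, Vf_eq _ ρ2 q (by positivity) hq.1]
  have hT1 : 1 ≤ (lam * t ^ ρ1) ^ (1 / ρ1) := one_le_rpow hx (by positivity)
  have hT : (lam * t ^ ρ1) ^ (1 / ρ1) ≤ (lam * t ^ ρ2) ^ (1 / ρ2) := by
    rw [xpow _ _ _ hl ht h0, xpow _ _ _ hl ht h2]
    exact mul_le_mul_of_nonneg_left (rpow_le_rpow_of_exponent_ge hl hl1 hs) ht.le
  have hp : q ^ (1 / ρ1) ≤ q ^ (1 / ρ2) := rpow_le_rpow_of_exponent_ge hq.1 hq.2.le hs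
  have p1 := rpow_pos_of_pos hq.1 (1 / ρ1)
  have p2 := rpow_pos_of_pos hq.1 (1 / ρ2)
  have hp2 : q ^ (1 / ρ2) ≤ 1 := rpow_le_one hq.1.le hq.2.le (by positivity)
  have h := (v_anti _ hT1).antitoneOn ⟨p1, hp.trans hp2⟩ ⟨p2, hp2⟩ hp
  refine le_trans ?_ h
  gcongr

/-- Pointwise loss estimate. -/
lemma g_loss (p t s2 s1 : ℝ) (hp : 0 < p) (h2 : 1 ≤ s2) (h12 : s2 ≤ s1) (ht : 4 ≤ t) :
    exp (-(t * p ^ s2)) - exp (-(t * p ^ s1)) ≤ 8 * exp (-t / 4) * (s1 - s2) * exp (-p) := by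
  rcases le_total p 1 with h | h
  · have h1 : p ^ s1 ≤ p ^ s2 := rpow_le_rpow_of_exponent_ge hp h h12
    have h3 : exp (-(t * p ^ s2)) ≤ exp (-(t * p ^ s1)) := by
      gcongr
    have h4 : 0 ≤ s1 - s2 := by linarith
    have : 0 ≤ 8 * exp (-t / 4) * (s1 - s2) * exp (-p) := by positivity
    linarith
  · have hder : ∀ s : ℝ, HasDerivAt (fun s => -exp (-(t * p ^ s)))
        (-(exp (-(t * p ^ s)) * (-(t * (log p * p ^ s))))) s := by
      intro s
      have h1 : HasDerivAt (fun s : ℝ => p ^ s) (log p * p ^ s) s := by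
        have := (hasDerivAt_id s).const_rpow hp
        simpa using this
      exact ((h1.const_mul t).neg.exp).neg
    have hb : ∀ s ∈ interior (Ici (1 : ℝ)), deriv (fun s => -exp (-(t * p ^ s))) s ≤
        8 * exp (-t / 4) * exp (-p) := by
      intro s hs
      rw [interior_Ici] at hs
      rw [(hder s).deriv]
      have hs : 1 < s := hs
      set y := p ^ s with hy
      have hyp : p ≤ y := by
        conv_lhs => rw [← rpow_one p]
        exact rpow_le_rpow_of_exponent_le h hs.le
      have hl : log p ≤ y := (log_le_self hp.le).trans hyp
      have hz := Real.pow_div_factorial_le_exp (t * y / 2) (by positivity) 2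
      have hz2 : (t * y) ^ 2 ≤ 8 * exp (t * y / 2) := by
        simp [Nat.factorial] at hz
        nlinarith
      have hy0 : 0 < y := by linarith
      have h5 : t * (log p * y) ≤ (t * y) ^ 2 := by
        have : t * (log p * y) ≤ t * (y * y) := by gcongr
        nlinarith [mul_pos hy0 hy0]
      calc -(exp (-(t * y)) * (-(t * (log p * y)))) = exp (-(t * y)) * (t * (log p * y)) := by ring
        _ ≤ exp (-(t * y)) * (8 * exp (t * y / 2)) := by
          apply mul_le_mul_of_nonneg_left (h5.trans hz2) (exp_pos _).le
        _ = 8 * exp (-(t * y) / 2) := by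
          rw [mul_left_comm, ← exp_add]; ring_nf
        _ ≤ 8 * exp (-t / 4 + -p) := by
          gcongr
          nlinarith
        _ = _ := by rw [exp_add]; ring
    have := (convex_Ici (1 : ℝ)).image_sub_le_mul_sub_of_deriv_le
      (fun s _ => (hder s).continuousAt.continuousWithinAt)
      (fun s _ => (hder s).differentiableAt.differentiableWithinAt) hb s2 h2 s1 (h2.trans h12) h12
    linarith

lemma arg1 (lam t ρ q : ℝ) (hl : 0 < lam) (ht : 0 < t) (hρ : 0 < ρ) (hq : 0 < q) :
    Vf (lam * t ^ ρ) ρ q = exp (-(t * (lam * q) ^ (1 / ρ))) +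
      exp (-(t * (lam / q) ^ (1 / ρ))) := by
  unfold Vf
  rw [mul_right_comm, xpow _ _ _ (mul_pos hl hq) ht hρ, mul_div_right_comm,
    xpow _ _ _ (div_pos hl hq) ht hρ]

lemma Vf_loss (lam t ρ1 ρ2 q : ℝ) (hl : 0 < lam) (ht : 4 ≤ t) (h0 : 0 < ρ1)
    (h12 : ρ1 < ρ2) (h2 : ρ2 < 1) (hq : q ∈ Ioo (0 : ℝ) 1) :
    Vf (lam * t ^ ρ2) ρ2 q - Vf (lam * t ^ ρ1) ρ1 q ≤
      16 * exp (-t / 4) * (1 / ρ1 - 1 / ρ2) * exp (-(lam * q)) := by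
  have h20 : 0 < ρ2 := by linarith
  have hs : 1 / ρ2 ≤ 1 / ρ1 := one_div_le_one_div_of_le h0 h12.le
  have hs2 : 1 ≤ 1 / ρ2 := by rw [le_div_iff₀ h20]; linarith
  rw [arg1 _ _ _ _ hl (by linarith) h0 hq.1, arg1 _ _ _ _ hl (by linarith) h20 hq.1]
  have a1 := g_loss (lam * q) t _ _ (mul_pos hl hq.1) hs2 hs ht
  have a2 := g_loss (lam / q) t _ _ (div_pos hl hq.1) hs2 hs ht
  have a3 : exp (-(lam / q)) ≤ exp (-(lam * q)) := by
    rw [exp_le_exp, neg_le_neg_iff, le_div_iff₀ hq.1]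
    nlinarith [mul_pos hl hq.1, hq.1, hq.2, mul_pos (mul_pos hl hq.1) hq.1]
  have a4 : 0 ≤ 8 * exp (-t / 4) * (1 / ρ1 - 1 / ρ2) := by
    have : 0 ≤ 1 / ρ1 - 1 / ρ2 := by linarith
    positivity
  have a5 := mul_le_mul_of_nonneg_left a3 a4
  linarith

lemma dens_exp (lam φ q : ℝ) (hl : 0 < lam) (h0 : 0 < φ) (h1 : φ < π)
    (hq : q ∈ Ioo (0 : ℝ) 1) :
    exp (-(lam * q)) * dens φ q ≤ 4 * exp (-(lam * q)) + 1 / lam * dens φ q := by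
  have hd := dens_pos φ q h0 h1
  have hD := densD_pos φ q h0 h1
  have he := exp_pos (-(lam * q))
  rcases le_total q (1 / 2) with h | h
  · have : dens φ q ≤ 4 := by
      unfold dens
      rw [div_le_iff₀ (by positivity)]
      have hs : sin φ ≤ φ := sin_le h0.le
      have : 1 / 4 ≤ 1 + 2 * q * cos φ + q ^ 2 := by nlinarith [neg_one_le_cos φ, hq.1]
      nlinarith
    have : exp (-(lam * q)) * dens φ q ≤ exp (-(lam * q)) * 4 := by gcongr
    have : 0 < 1 / lam * dens φ q := by positivity
    linarith
  · have : exp (-(lam * q)) ≤ 1 / lam := by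
      rw [exp_neg, ← one_div]
      apply one_div_le_one_div_of_le hl
      have h5 := Real.quadratic_le_exp_of_nonneg (mul_pos hl hq.1).le
      nlinarith [mul_pos hl hq.1, sq_nonneg (lam * q - 1)]
    have : exp (-(lam * q)) * dens φ q ≤ 1 / lam * dens φ q := by gcongr
    linarith

lemma exp_int (lam : ℝ) (hl : 0 < lam) : ∫ q in Ioo 0 1, exp (-(lam * q)) ≤ 1 / lam := by
  rw [← integral_Ioc_eq_integral_Ioo, ← intervalIntegral.integral_of_le zero_le_one]
  have : ∀ q ∈ uIcc (0 : ℝ) 1, HasDerivAt (fun q => -(1 / lam) * exp (-(lam * q)))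
      (exp (-(lam * q))) q := by
    intro q _
    have h1 : HasDerivAt (fun q => exp (-(lam * q))) (exp (-(lam * q)) * (-(lam * 1))) q :=
      (((hasDerivAt_id q).const_mul lam).neg).exp
    refine (h1.const_mul (-(1 / lam))).congr_deriv ?_
    have : 1 / lam * lam = 1 := by rw [one_div, inv_mul_cancel₀ hl.ne']
    linear_combination (exp (-(lam * q))) * this
  rw [intervalIntegral.integral_eq_sub_of_hasDerivAt this
    (Continuous.intervalIntegrable (by fun_prop) _ _)]
  have := exp_pos (-(lam * 1))
  simp only [mul_zero, neg_zero, exp_zero]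
  have : 0 < 1 / lam * exp (-(lam * 1)) := by positivity
  linarith

lemma loss_int (lam t ρ1 ρ2 : ℝ) (hl : 0 < lam) (ht : 4 ≤ t) (h0 : 0 < ρ1)
    (h12 : ρ1 < ρ2) (h2 : ρ2 < 1) :
    (∫ q in Ioo 0 1, Vf (lam * t ^ ρ2) ρ2 q * dens (π * ρ1) q) -
      (∫ q in Ioo 0 1, Vf (lam * t ^ ρ1) ρ1 q * dens (π * ρ1) q) ≤
      72 * exp (-t / 4) * (1 / ρ1 - 1 / ρ2) / lam := by
  have hφ0 : 0 < π * ρ1 := by positivity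
  have hφ1 : π * ρ1 < π := by nlinarith [pi_pos]
  have ht0 : 0 < t := by linarith
  have i1 := Vf_int (lam * t ^ ρ1) ρ1 (π * ρ1) (by positivity) hφ0 hφ1
  have i2 := Vf_int (lam * t ^ ρ2) ρ2 (π * ρ1) (by positivity) hφ0 hφ1
  have hd := dens_int (π * ρ1) hφ0 hφ1
  have hs : 1 / ρ2 ≤ 1 / ρ1 := one_div_le_one_div_of_le h0 h12.le
  set M := 16 * exp (-t / 4) * (1 / ρ1 - 1 / ρ2) with hM
  have hM0 : 0 ≤ M := by
    have : 0 ≤ 1 / ρ1 - 1 / ρ2 := by linarith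
    positivity
  have ie : IntegrableOn (fun q => 4 * exp (-(lam * q))) (Ioo 0 1) := by
    have : Continuous (fun q => 4 * exp (-(lam * q))) := by fun_prop
    exact (this.integrableOn_Icc (a := 0) (b := 1)).mono_set Ioo_subset_Icc_self
  have id2 : IntegrableOn (fun q => 1 / lam * dens (π * ρ1) q) (Ioo 0 1) := hd.const_mul _
  have is : IntegrableOn (fun q => 4 * exp (-(lam * q)) + 1 / lam * dens (π * ρ1) q) (Ioo 0 1) :=
    ie.add id2
  rw [← integral_sub i2 i1]
  calc _ ≤ ∫ q in Ioo 0 1, M * (4 * exp (-(lam * q)) + 1 / lam * dens (π * ρ1) q) := by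
        refine setIntegral_mono_on (i2.sub i1) (is.const_mul M) measurableSet_Ioo ?_
        intro q hq
        have a1 := Vf_loss lam t ρ1 ρ2 q hl ht h0 h12 h2 hq
        have a2 := dens_exp lam (π * ρ1) q hl hφ0 hφ1 hq
        have a3 := dens_pos (π * ρ1) q hφ0 hφ1
        have a4 := mul_le_mul_of_nonneg_right a1 a3.le
        have a5 := mul_le_mul_of_nonneg_left a2 hM0
        rw [← hM] at a4
        linarith
    _ = M * (4 * (∫ q in Ioo 0 1, exp (-(lam * q))) + 1 / lam * (1 / 2)) := by
        rw [integral_const_mul, integral_add ie id2, integral_const_mul, integral_const_mul,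
          dens_integral _ hφ0 hφ1]
    _ ≤ M * (4 * (1 / lam) + 1 / lam * (1 / 2)) := by
        have := exp_int lam hl
        gcongr
    _ = _ := by rw [hM]; ring

lemma gain_pos (lam t ρ1 ρ2 : ℝ) (hl1 : 1 < lam) (ht : 8000 ≤ t) (h0 : 0 < ρ1)
    (h12 : ρ1 < ρ2) (h2 : ρ2 < 1) (hx : 8000 ≤ t ^ ρ2) :
    π ^ 2 * (ρ2 ^ 2 - ρ1 ^ 2) / (800 * lam * t) ≤
      (∫ q in Ioo 0 1, Vf (lam * t ^ ρ2) ρ2 q * dens (π * ρ1) q) -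
      (∫ q in Ioo 0 1, Vf (lam * t ^ ρ2) ρ2 q * dens (π * ρ2) q) := by
  have hρ2 : 0 < ρ2 := by linarith
  have ht0 : 0 < t := by linarith
  set x := lam * t ^ ρ2 with hxd
  have hx2 : 8000 ≤ x := by nlinarith
  have hx0 : 0 < x := by linarith
  have hxt : x ≤ lam * t := by
    have : t ^ ρ2 ≤ t ^ (1 : ℝ) := rpow_le_rpow_of_exponent_le (by linarith) h2.le
    rw [rpow_one] at this
    rw [hxd]; gcongr
  have hs2 : 1 ≤ 1 / ρ2 := by rw [le_div_iff₀ hρ2]; linarith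
  have hπ1 : π * ρ1 < π * ρ2 := by have := pi_pos; gcongr
  have hπ2 : π * ρ2 < π := by nlinarith [pi_pos]
  have hπ0 : 0 < π * ρ1 := by positivity
  have hη : 1 / x < 1 / 200 := one_div_lt_one_div_of_lt (by norm_num) (by linarith)
  have G := gain (Vf x ρ2) (π * ρ1) (π * ρ2) (1 / x) hπ0 hπ1 hπ2
    (Vf_anti x ρ2 (by linarith) hρ2).antitoneOn (by positivity) hη
    (Vf_int x ρ2 _ hx0 hπ0 (by linarith)) (Vf_int x ρ2 _ hx0 (by linarith) hπ2)
  refine le_trans ?_ G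
  have V1 : 1 / 3 ≤ Vf x ρ2 (1 / x) := by
    have e1 : exp (-(x * (1 / x)) ^ (1 / ρ2)) = exp (-1) := by
      rw [mul_one_div_cancel hx0.ne', one_rpow]
    have e2 : 1 / 3 ≤ exp (-1) := by
      rw [exp_neg, ← one_div]
      exact one_div_le_one_div_of_le (exp_pos 1) (by linarith [exp_one_lt_d9])
    have e3 := exp_pos (-(x / (1 / x)) ^ (1 / ρ2))
    unfold Vf
    rw [e1]; linarith
  have key : ∀ y : ℝ, 40 ≤ y → exp (-y ^ (1 / ρ2)) ≤ 1 / 24 := by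
    intro y hy
    have h3 : y ≤ y ^ (1 / ρ2) := by
      conv_lhs => rw [← rpow_one y]
      exact rpow_le_rpow_of_exponent_le (by linarith) hs2
    have h4 := add_one_le_exp (y ^ (1 / ρ2))
    rw [exp_neg, ← one_div]
    exact one_div_le_one_div_of_le (by norm_num) (by linarith)
  have V2 : Vf x ρ2 (1 / 200) ≤ 1 / 12 := by
    have k1 := key (x * (1 / 200)) (by linarith)
    have k2 := key (x / (1 / 200)) (by linarith)
    unfold Vf; linarith
  have hP : 0 ≤ π ^ 2 * (ρ2 ^ 2 - ρ1 ^ 2) := by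
    have : 0 ≤ ρ2 ^ 2 - ρ1 ^ 2 := by nlinarith
    positivity
  calc π ^ 2 * (ρ2 ^ 2 - ρ1 ^ 2) / (800 * lam * t)
      = 1 / (lam * t) * (1 / 4 * (π ^ 2 * (ρ2 ^ 2 - ρ1 ^ 2) / 200)) := by
        field_simp; ring
    _ ≤ 1 / x * ((Vf x ρ2 (1 / x) - Vf x ρ2 (1 / 200)) *
          (((π * ρ2) ^ 2 - (π * ρ1) ^ 2) / 200)) := by
        have e : (π * ρ2) ^ 2 - (π * ρ1) ^ 2 = π ^ 2 * (ρ2 ^ 2 - ρ1 ^ 2) := by ring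
        rw [e]
        have a1 : 1 / (lam * t) ≤ 1 / x := one_div_le_one_div_of_le hx0 hxt
        have a2 : 1 / 4 ≤ Vf x ρ2 (1 / x) - Vf x ρ2 (1 / 200) := by linarith
        gcongr

lemma final_num (t ρ1 ρ2 : ℝ) (ht : 8000 ≤ t) (h1 : 1 / t ≤ ρ1) (h12 : ρ1 < ρ2) :
    57600 * t * exp (-t / 4) < π ^ 2 * (ρ1 + ρ2) * (ρ1 * ρ2) := by
  have ht0 : 0 < t := by linarith
  have hu : 0 < 1 / t := by positivity
  have hπ : 9 ≤ π ^ 2 := by nlinarith [pi_gt_three]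
  have r : 18 * (1 / t) ^ 3 ≤ π ^ 2 * (ρ1 + ρ2) * (ρ1 * ρ2) := by
    calc 18 * (1 / t) ^ 3 = 9 * (1 / t + 1 / t) * (1 / t * (1 / t)) := by ring
      _ ≤ _ := by
        have : 1 / t ≤ ρ2 := by linarith
        have : 0 < ρ1 := by linarith
        have : 0 < ρ2 := by linarith
        have : 0 ≤ π ^ 2 * (ρ1 + ρ2) := by positivity
        gcongr
  refine lt_of_lt_of_le ?_ r
  have hE := Real.pow_div_factorial_le_exp (t / 4) (by positivity) 8
  have e : exp (-t / 4) = 1 / exp (t / 4) := by rw [one_div, ← exp_neg]; ring_nf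
  rw [e, one_div_pow, mul_one_div, mul_one_div, div_lt_div_iff₀ (exp_pos _) (by positivity)]
  have h8 : (t / 4) ^ 8 / ((8 : ℕ).factorial : ℝ) = t ^ 4 * t ^ 4 / (65536 * 40320) := by
    norm_num [Nat.factorial]; ring
  rw [h8] at hE
  have h4 : (8000 : ℝ) ^ 4 ≤ t ^ 4 := by gcongr
  have ht4 : 0 < t ^ 4 := by positivity
  have h5 : 8000 ^ 4 * t ^ 4 / (65536 * 40320) ≤ t ^ 4 * t ^ 4 / (65536 * 40320) := by gcongr
  nlinarith

lemma main_lt (lam t ρ1 ρ2 : ℝ) (hl : 0 < lam) (ht : 8000 ≤ t) (h0 : 0 < ρ1)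
    (h12 : ρ1 < ρ2) (h2 : ρ2 < 1) (hx : 8000 ≤ t ^ ρ1) (hx1 : 1 ≤ lam * t ^ ρ1)
    (h1 : 1 / t ≤ ρ1) :
    mittagLeffler ρ2 (-(lam * t ^ ρ2)) < mittagLeffler ρ1 (-(lam * t ^ ρ1)) := by
  have hρ2 : 0 < ρ2 := by linarith
  have ht0 : 0 < t := by linarith
  have hp1 : 0 < lam * t ^ ρ1 := by positivity
  have hp2 : 0 < lam * t ^ ρ2 := by positivity
  have hπ1 : π * ρ1 < π * ρ2 := by have := pi_pos; gcongr
  have hπ2 : π * ρ2 < π := by nlinarith [pi_pos]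
  have hπ0 : 0 < π * ρ1 := by positivity
  have ht12 : t ^ ρ1 ≤ t ^ ρ2 := rpow_le_rpow_of_exponent_le (by linarith) h12.le
  have hx2 : 1 ≤ lam * t ^ ρ2 := hx1.trans (by gcongr)
  have R1 : mittagLeffler ρ1 (-(lam * t ^ ρ1)) =
      ∫ q in Ioo 0 1, Vf (lam * t ^ ρ1) ρ1 q * dens (π * ρ1) q :=
    ml_rep ρ1 _ h0 (by linarith) hp1
  have R2 : mittagLeffler ρ2 (-(lam * t ^ ρ2)) =
      ∫ q in Ioo 0 1, Vf (lam * t ^ ρ2) ρ2 q * dens (π * ρ2) q :=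
    ml_rep ρ2 _ hρ2 h2 hp2
  rw [R1, R2]
  have j1 := Vf_int (lam * t ^ ρ1) ρ1 _ hp1 hπ0 (hπ1.trans hπ2)
  have j2 := Vf_int (lam * t ^ ρ2) ρ2 _ hp2 hπ0 (hπ1.trans hπ2)
  have j3 := Vf_int (lam * t ^ ρ2) ρ2 _ hp2 (hπ0.trans hπ1) hπ2
  rcases le_or_gt lam 1 with hl1 | hl1
  · have A : ∫ q in Ioo 0 1, Vf (lam * t ^ ρ2) ρ2 q * dens (π * ρ1) q ≤
        ∫ q in Ioo 0 1, Vf (lam * t ^ ρ1) ρ1 q * dens (π * ρ1) q := by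
      refine setIntegral_mono_on j2 j1 measurableSet_Ioo fun q hq => ?_
      exact mul_le_mul_of_nonneg_right (Vf_le lam t ρ1 ρ2 q hl hl1 ht0 h0 h12 hx1 hq)
        (dens_pos _ q hπ0 (hπ1.trans hπ2)).le
    have hanti := Vf_anti (lam * t ^ ρ2) ρ2 hx2 hρ2
    have G := gain (Vf (lam * t ^ ρ2) ρ2) (π * ρ1) (π * ρ2) (1 / 400) hπ0 hπ1 hπ2
      hanti.antitoneOn (by norm_num) (by norm_num) j2 j3
    have hs : Vf (lam * t ^ ρ2) ρ2 (1 / 200) < Vf (lam * t ^ ρ2) ρ2 (1 / 400) :=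
      hanti ⟨by norm_num, by norm_num⟩ ⟨by norm_num, by norm_num⟩ (by norm_num)
    have hP : 0 < (π * ρ2) ^ 2 - (π * ρ1) ^ 2 := by nlinarith
    have := mul_pos (sub_pos.2 hs) (div_pos hP (by norm_num : (0 : ℝ) < 200))
    linarith
  · have Ls := loss_int lam t ρ1 ρ2 hl (by linarith) h0 h12 h2
    have G := gain_pos lam t ρ1 ρ2 hl1 ht h0 h12 h2 (hx.trans ht12)
    have F := final_num t ρ1 ρ2 ht h1 h12
    suffices 72 * exp (-t / 4) * (1 / ρ1 - 1 / ρ2) / lam <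
        π ^ 2 * (ρ2 ^ 2 - ρ1 ^ 2) / (800 * lam * t) by linarith
    have e1 : 72 * exp (-t / 4) * (1 / ρ1 - 1 / ρ2) / lam =
        (57600 * t * exp (-t / 4)) * ((ρ2 - ρ1) / (ρ1 * ρ2 * (800 * lam * t))) := by
      field_simp; ring
    have e2 : π ^ 2 * (ρ2 ^ 2 - ρ1 ^ 2) / (800 * lam * t) =
        (π ^ 2 * (ρ1 + ρ2) * (ρ1 * ρ2)) * ((ρ2 - ρ1) / (ρ1 * ρ2 * (800 * lam * t))) := by
      field_simp; ring
    rw [e1, e2]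
    apply mul_lt_mul_of_pos_right F
    have : 0 < ρ2 - ρ1 := by linarith
    positivity

/-- With `B₁ = 43`, `B₂ = 4.6`: if `k ≥ (1/ρ₀)·max{B₁/B₂, ln(2B₂k/λ₀)}`, then for every
`t₀ ≥ e^k` and every `λ ≥ λ₀`, the function `ρ ↦ E_ρ(−λ t₀^ρ)` is strictly decreasing
on `[ρ₀, 1)`. -/
theorem stmt2 (ρ₀ lam₀ k : ℝ) (hρ₀ : 0 < ρ₀) (hρ₀' : ρ₀ < 1) (hlam₀ : 0 < lam₀)
    (hk : (1 / ρ₀) * max ((43 : ℝ) / 4.6) (Real.log (2 * 4.6 * k / lam₀)) ≤ k) :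
    ∀ t₀ : ℝ, Real.exp k ≤ t₀ → ∀ lam : ℝ, lam₀ ≤ lam →
      StrictAntiOn (fun ρ : ℝ => mittagLeffler ρ (-(lam * t₀ ^ ρ))) (Set.Ico ρ₀ 1) := by
  intro t ht lam hlam ρ1 h1 ρ2 h2 h12
  have hl : 0 < lam := by linarith
  rw [one_div, inv_mul_le_iff₀ hρ₀, max_le_iff] at hk
  obtain ⟨k1, k2⟩ := hk
  have k9 : 9 ≤ ρ₀ * k := le_trans (by norm_num) k1
  have hk0 : 0 < k := by
    by_contra h
    push Not at h
    nlinarith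
  have hkk : ρ₀ * k ≤ k := by nlinarith
  have e9 : (8000 : ℝ) ≤ exp 9 := by
    have : exp 9 = exp 1 ^ 9 := by rw [← exp_nat_mul]; norm_num
    rw [this]
    calc (8000 : ℝ) ≤ 2.718 ^ 9 := by norm_num
      _ ≤ _ := by
        have := exp_one_gt_d9
        gcongr
        linarith
  have ht8 : 8000 ≤ t := (e9.trans (exp_le_exp.2 (k9.trans hkk))).trans ht
  have ht0 : 0 < t := by linarith
  have hlow : exp (ρ₀ * k) ≤ t ^ ρ1 := by
    calc exp (ρ₀ * k) = exp k ^ ρ₀ := by rw [← exp_mul, mul_comm]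
      _ ≤ t ^ ρ₀ := rpow_le_rpow (exp_pos _).le ht hρ₀.le
      _ ≤ t ^ ρ1 := rpow_le_rpow_of_exponent_le (by linarith) h1.1
  refine main_lt lam t ρ1 ρ2 hl ht8 (by linarith [h1.1]) h12 h2.2
    ((e9.trans (exp_le_exp.2 k9)).trans hlow) ?_ ?_
  · have hq : 0 < 2 * 4.6 * k / lam₀ := by positivity
    have h3 : 2 * 4.6 * k / lam₀ ≤ exp (ρ₀ * k) := (log_le_iff_le_exp hq).1 k2
    rw [div_le_iff₀ hlam₀] at h3
    have h4 : exp (ρ₀ * k) * lam₀ ≤ t ^ ρ1 * lam := by gcongr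
    linarith
  · refine le_trans ?_ h1.1
    rw [div_le_iff₀ ht0]
    have : k ≤ t := by linarith [add_one_le_exp k]
    nlinarith
end

section
/- Let 0 < ρ₀ < 1, λ₀ > 0, and set B₁ = 43, B₂ = 4.6. If ρ₀ · λ₀ > 2B₁ · e^{−B₁/B₂} and 2 ≤ t₀ ≤ e^{B₁/B₂}, then for every λ ≥ λ₀ the function ρ ↦ E_ρ(−λ t₀^ρ) is strictly monotonically decreasing on the interval [ρ₀, 1). In particular, since 2B₁ e^{−B₁/B₂} < 0.0075, this holds whenever ρ₀ λ₀ > 0.0075 and t₀ = 2. -/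
open Set Real

lemma crp (α : ℝ) (h0 : 0 ≤ α) (h1 : α ≤ 1) (N : ℕ) : ∃ p : ℕ → ℝ, (∀ j, 0 ≤ p j) ∧
    ∀ k : ℕ, ∏ i ∈ Finset.range N, (1 + α * k / (i + 1)) =
      ∑ j ∈ Finset.range (N + 1), p j * ((k + j).choose j : ℝ) := by
  induction N with
  | zero => exact ⟨fun _ => 1, fun _ => zero_le_one, fun k => by simp⟩
  | succ N ih =>
    obtain ⟨p, hp, h⟩ := ih
    refine ⟨fun j => (if j ≤ N then p j * (1 - α * (j + 1) / (N + 1)) else 0) +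
      (if j = 0 then 0 else p (j - 1) * (α * j / (N + 1))), ?_, ?_⟩
    · intro j
      have hN : (0:ℝ) < N + 1 := by positivity
      apply add_nonneg
      · split_ifs with hj
        · apply mul_nonneg (hp j)
          rw [sub_nonneg, div_le_one hN]
          have : (j:ℝ) ≤ N := by exact_mod_cast hj
          nlinarith [(Nat.cast_nonneg j : (0:ℝ) ≤ j)]
        · exact le_rfl
      · split_ifs
        · exact le_rfl
        · exact mul_nonneg (hp _) (by positivity)
    · intro k
      rw [Finset.prod_range_succ, h k, Finset.sum_mul]
      simp only [add_mul, Finset.sum_add_distrib]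
      rw [Finset.sum_range_succ (n := N + 1)]
      rw [Finset.sum_range_succ' (n := N + 1)]
      simp only [Nat.succ_ne_zero, if_false, if_true, Nat.add_sub_cancel, zero_mul, add_zero,
        show ¬ (N + 1 ≤ N) by omega]
      rw [← Finset.sum_add_distrib]
      apply Finset.sum_congr rfl
      intro j hj
      have hj' : j ≤ N := by have := Finset.mem_range.1 hj; omega
      rw [if_pos hj']
      have hc : ((k + (j + 1)).choose (j + 1) : ℝ) * (j + 1) = (k + j + 1) * (k + j).choose j := by
        have := Nat.add_one_mul_choose_eq (k + j) j
        have h2 : (((k + j + 1) * (k + j).choose j : ℕ) : ℝ) =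
          (((k + j + 1).choose (j + 1) * (j + 1) : ℕ) : ℝ) := by rw [this]
        push_cast at h2
        rw [← add_assoc, h2]
      have hN : (N:ℝ) + 1 ≠ 0 := by positivity
      push_cast
      field_simp
      linear_combination (-α * p j) * hc

lemma hasSum_k_choose (j : ℕ) (z : ℝ) (hz : |z| < 1) :
    HasSum (fun k : ℕ => (k : ℝ) * z ^ k * ((k + j).choose j : ℝ))
      ((j + 1) * z / (1 - z) ^ (j + 2)) := by
  have h1 := hasSum_choose_mul_geometric_of_norm_lt_one j (r := z) (by simpa using hz)
  have h2 := hasSum_choose_mul_geometric_of_norm_lt_one (j + 1) (r := z) (by simpa using hz)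
  have h3 := (h2.sub h1).mul_left ((j : ℝ) + 1)
  have hz1 : 1 - z ≠ 0 := by have := abs_lt.1 hz; linarith
  convert! h3 using 1
  · funext k
    have hc : ((k + (j + 1)).choose (j + 1) : ℝ) * (j + 1) = (k + j + 1) * (k + j).choose j := by
      have := Nat.add_one_mul_choose_eq (k + j) j
      have h2 : (((k + j + 1) * (k + j).choose j : ℕ) : ℝ) =
        (((k + j + 1).choose (j + 1) * (j + 1) : ℕ) : ℝ) := by rw [this]
      push_cast at h2
      rw [← add_assoc, h2]
    linear_combination (-z ^ k) * hc
  · field_simp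
    ring

open Filter Topology in
lemma mlb_tendsto (a : ℝ) (ha : 0 ≤ a) :
    Tendsto (fun N : ℕ => (∏ i ∈ Finset.range N, (1 + a / (i + 1))) / (N : ℝ) ^ a) atTop
      (𝓝 (1 / Real.Gamma (a + 1))) := by
  rcases ha.eq_or_lt with rfl | ha
  · simp
  have h := Real.GammaSeq_tendsto_Gamma a
  have hG := Real.Gamma_pos_of_pos ha
  rw [Real.Gamma_add_one ha.ne']
  have h2 := (h.const_mul a).inv₀ (mul_pos ha hG).ne'
  rw [one_div]
  refine h2.congr' ?_
  filter_upwards [eventually_ge_atTop 1] with N hN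
  unfold Real.GammaSeq
  rw [Finset.prod_range_succ']
  have h3 : ∏ k ∈ Finset.range N, (a + ((k + 1 : ℕ) : ℝ)) =
      (N.factorial : ℝ) * ∏ i ∈ Finset.range N, (1 + a / (i + 1)) := by
    rw [← Finset.prod_range_add_one_eq_factorial]
    push_cast
    rw [← Finset.prod_mul_distrib]
    apply Finset.prod_congr rfl
    intro i _
    have : (i : ℝ) + 1 ≠ 0 := by positivity
    field_simp
    ring
  rw [h3]
  have hP : ∏ i ∈ Finset.range N, (1 + a / ((i : ℝ) + 1)) ≠ 0 := by
    apply ne_of_gt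
    apply Finset.prod_pos
    intro i _
    positivity
  have hN' : (N : ℝ) ^ a ≠ 0 := by
    have : (0 : ℝ) < N := by exact_mod_cast hN
    positivity
  have hf : (N.factorial : ℝ) ≠ 0 := by positivity
  simp only [Nat.cast_zero, add_zero]
  field_simp

lemma mlb_step (a : ℝ) (ha : 0 ≤ a) (N : ℕ) (hN : 1 ≤ N) :
    (∏ i ∈ Finset.range (N + 1), (1 + a / ((i : ℝ) + 1))) / ((N + 1 : ℕ) : ℝ) ^ a ≤
    (∏ i ∈ Finset.range N, (1 + a / ((i : ℝ) + 1))) / (N : ℝ) ^ a := by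
  have hN0 : (0 : ℝ) < N := by exact_mod_cast hN
  have hP : 0 ≤ ∏ i ∈ Finset.range N, (1 + a / ((i : ℝ) + 1)) := by
    apply Finset.prod_nonneg
    intro i _
    positivity
  have key : (1 + a / ((N : ℝ) + 1)) ≤ (((N : ℝ) + 1) / N) ^ a := by
    have h1 := Real.one_sub_inv_le_log_of_pos (x := ((N : ℝ) + 1) / N) (by positivity)
    have h2 : 1 - (((N : ℝ) + 1) / N)⁻¹ = 1 / ((N : ℝ) + 1) := by field_simp; ring
    rw [h2] at h1
    rw [Real.rpow_def_of_pos (by positivity)]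
    calc 1 + a / ((N : ℝ) + 1) = a * (1 / ((N : ℝ) + 1)) + 1 := by ring
      _ ≤ Real.log (((N : ℝ) + 1) / N) * a + 1 := by nlinarith
      _ ≤ _ := Real.add_one_le_exp _
  rw [Real.div_rpow (by positivity) hN0.le] at key
  rw [Finset.prod_range_succ]
  push_cast
  rw [div_le_div_iff₀ (by positivity) (by positivity)]
  rw [le_div_iff₀ (by positivity)] at key
  rw [mul_assoc]
  exact mul_le_mul_of_nonneg_left key hP

lemma mlb_anti (a : ℝ) (ha : 0 ≤ a) (m N : ℕ) (hm : 1 ≤ m) (hN : m ≤ N) :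
    (∏ i ∈ Finset.range N, (1 + a / ((i : ℝ) + 1))) / (N : ℝ) ^ a ≤
    (∏ i ∈ Finset.range m, (1 + a / ((i : ℝ) + 1))) / (m : ℝ) ^ a := by
  induction N, hN using Nat.le_induction with
  | base => exact le_rfl
  | succ N hN ih => exact (mlb_step a ha N (hm.trans hN)).trans ih

noncomputable def mlH (ρ x : ℝ) : ℝ := ∑' k : ℕ, -((k : ℝ) * (-x) ^ k / Real.Gamma (ρ * k + 1))

lemma mlHN_hasSum (ρ : ℝ) (N : ℕ) (p : ℕ → ℝ)
    (hp : ∀ k : ℕ, ∏ i ∈ Finset.range N, (1 + ρ * k / (i + 1)) =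
      ∑ j ∈ Finset.range (N + 1), p j * ((k + j).choose j : ℝ)) (z : ℝ) (hz : |z| < 1) :
    HasSum (fun k : ℕ => (k : ℝ) * z ^ k * ∏ i ∈ Finset.range N, (1 + ρ * k / ((i : ℝ) + 1)))
      (∑ j ∈ Finset.range (N + 1), p j * ((j + 1) * z / (1 - z) ^ (j + 2))) := by
  have := hasSum_sum (s := Finset.range (N + 1))
    (fun j _ => (hasSum_k_choose j z hz).mul_left (p j))
  convert! this using 1
  funext k
  rw [hp k, Finset.mul_sum]
  apply Finset.sum_congr rfl
  intro j _
  ring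

lemma rpow_nat_aux (ρ x : ℝ) (N k : ℕ) :
    x ^ k / (N : ℝ) ^ (ρ * k) = (x / (N : ℝ) ^ ρ) ^ k := by
  rw [div_pow, Real.rpow_mul (Nat.cast_nonneg N), Real.rpow_natCast]

open Filter Topology in
lemma mlHN_tendsto (ρ : ℝ) (hρ : 0 < ρ) (hρ1 : ρ ≤ 1) (x : ℝ) (hx : 0 ≤ x) :
    Tendsto (fun N : ℕ => ∑' k : ℕ, -((k : ℝ) * (-x / (N : ℝ) ^ ρ) ^ k *
      ∏ i ∈ Finset.range N, (1 + ρ * k / ((i : ℝ) + 1)))) atTop (𝓝 (mlH ρ x)) := by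
  obtain ⟨m, hm1, hm⟩ : ∃ m : ℕ, 1 ≤ m ∧ x < (m : ℝ) ^ ρ := by
    have h := (tendsto_rpow_atTop hρ).comp (tendsto_natCast_atTop_atTop (R := ℝ))
    have := (h.eventually_gt_atTop x).and (eventually_ge_atTop 1)
    obtain ⟨m, h1, h2⟩ := this.exists
    exact ⟨m, h2, h1⟩
  obtain ⟨p, hp0, hp⟩ := crp ρ hρ.le hρ1 m
  have hmp : (0 : ℝ) < (m : ℝ) ^ ρ := lt_of_le_of_lt hx hm
  have hS := (mlHN_hasSum ρ m p hp (x / (m : ℝ) ^ ρ) (by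
    rw [abs_of_nonneg (by positivity), div_lt_one hmp]; exact hm)).summable
  unfold mlH
  refine tendsto_tsum_of_dominated_convergence hS ?_ ?_
  · intro k
    have := ((mlb_tendsto (ρ * k) (by positivity)).const_mul ((k : ℝ) * (-x) ^ k)).neg
    convert! this using 2 with N
    · rw [← rpow_nat_aux]
      ring
    · ring
  · filter_upwards [eventually_ge_atTop m] with N hN k
    have hb := mlb_anti (ρ * k) (by positivity) m N hm1 hN
    have hP : ∀ M : ℕ, 0 ≤ ∏ i ∈ Finset.range M, (1 + ρ * k / ((i : ℝ) + 1)) := by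
      intro M
      apply Finset.prod_nonneg
      intro i _
      positivity
    rw [norm_neg, norm_mul, norm_mul, norm_pow, norm_div, norm_neg, Real.norm_of_nonneg hx,
      Real.norm_of_nonneg (hP N), Real.norm_of_nonneg (Nat.cast_nonneg k),
      Real.norm_of_nonneg (by positivity : 0 ≤ (N : ℝ) ^ ρ), ← rpow_nat_aux, ← rpow_nat_aux]
    calc _ = (k : ℝ) * x ^ k * ((∏ i ∈ Finset.range N, (1 + ρ * k / ((i : ℝ) + 1))) / (N : ℝ) ^ (ρ * k)) := by ring
      _ ≤ (k : ℝ) * x ^ k * ((∏ i ∈ Finset.range m, (1 + ρ * k / ((i : ℝ) + 1))) / (m : ℝ) ^ (ρ * k)) := by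
        gcongr
      _ = _ := by ring

open Filter Topology in
lemma mlH_props (ρ : ℝ) (hρ : 0 < ρ) (hρ1 : ρ ≤ 1) (x y : ℝ) (hx : 0 ≤ x) (hxy : x ≤ y) :
    0 ≤ mlH ρ x ∧ x * mlH ρ y ≤ y * mlH ρ x := by
  have hy : 0 ≤ y := hx.trans hxy
  have hTx := mlHN_tendsto ρ hρ hρ1 x hx
  have hTy := mlHN_tendsto ρ hρ hρ1 y hy
  have h := (tendsto_rpow_atTop hρ).comp (tendsto_natCast_atTop_atTop (R := ℝ))
  have hev := h.eventually_gt_atTop y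
  have key : ∀ (N : ℕ), y < (N : ℝ) ^ ρ → ∃ p : ℕ → ℝ, (∀ j, 0 ≤ p j) ∧ ∀ w, 0 ≤ w → w ≤ y →
      ∑' k : ℕ, -((k : ℝ) * (-w / (N : ℝ) ^ ρ) ^ k *
      ∏ i ∈ Finset.range N, (1 + ρ * k / ((i : ℝ) + 1))) =
      ∑ j ∈ Finset.range (N + 1), p j * ((j + 1) * (w / (N : ℝ) ^ ρ) / (1 + w / (N : ℝ) ^ ρ) ^ (j + 2)) := by
    intro N hN
    obtain ⟨p, hp0, hp⟩ := crp ρ hρ.le hρ1 N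
    refine ⟨p, hp0, fun w hw hwy => ?_⟩
    have hNp : (0 : ℝ) < (N : ℝ) ^ ρ := lt_of_le_of_lt hy hN
    have := (mlHN_hasSum ρ N p hp (-w / (N : ℝ) ^ ρ) (by
      rw [abs_div, abs_neg, abs_of_nonneg hw, abs_of_pos hNp, div_lt_one hNp]; linarith)).neg
    rw [this.tsum_eq, ← Finset.sum_neg_distrib]
    apply Finset.sum_congr rfl
    intro j _
    rw [show 1 - -w / (N : ℝ) ^ ρ = 1 + w / (N : ℝ) ^ ρ by ring]
    ring
  constructor
  · refine ge_of_tendsto hTx ?_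
    filter_upwards [hev] with N hN
    obtain ⟨p, hp0, hp⟩ := key N hN
    rw [hp x hx hxy]
    apply Finset.sum_nonneg
    intro j _
    have := hp0 j
    positivity
  · refine le_of_tendsto_of_tendsto (hTy.const_mul x) (hTx.const_mul y) ?_
    filter_upwards [hev] with N hN
    obtain ⟨p, hp0, hp⟩ := key N hN
    have hNp : (0 : ℝ) < (N : ℝ) ^ ρ := lt_of_le_of_lt hy hN
    rw [hp x hx hxy, hp y hy le_rfl, Finset.mul_sum, Finset.mul_sum]
    apply Finset.sum_le_sum
    intro j _
    have hpj := hp0 j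
    calc _ = (p j * (j + 1) * x * y / (N : ℝ) ^ ρ) * (1 / (1 + y / (N : ℝ) ^ ρ) ^ (j + 2)) := by ring
      _ ≤ (p j * (j + 1) * x * y / (N : ℝ) ^ ρ) * (1 / (1 + x / (N : ℝ) ^ ρ) ^ (j + 2)) := by
        gcongr
      _ = _ := by ring

lemma gamma_lower (a R : ℝ) (ha : 0 ≤ a) (hR : 0 < R) :
    Real.exp (-R) * R ^ a ≤ Real.Gamma (a + 1) := by
  rw [Real.Gamma_eq_integral (by linarith)]
  have hint := Real.GammaIntegral_convergent (s := a + 1) (by linarith)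
  have hsub : Ioi R ⊆ Ioi (0 : ℝ) := Ioi_subset_Ioi hR.le
  calc Real.exp (-R) * R ^ a = ∫ x in Ioi R, Real.exp (-x) * R ^ a := by
        rw [MeasureTheory.integral_mul_const, integral_exp_neg_Ioi]
    _ ≤ ∫ x in Ioi R, Real.exp (-x) * x ^ (a + 1 - 1) := by
        apply MeasureTheory.setIntegral_mono_on
        · exact (integrableOn_exp_neg_Ioi R).mul_const _
        · exact hint.mono_set hsub
        · exact measurableSet_Ioi
        · intro x hx
          rw [add_sub_cancel_right]
          have : R ≤ x := le_of_lt hx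
          gcongr
    _ ≤ _ := by
        apply MeasureTheory.setIntegral_mono_set hint
        · filter_upwards [MeasureTheory.ae_restrict_mem measurableSet_Ioi] with x hx
          have : (0 : ℝ) < x := hx
          simp only [Pi.zero_apply]
          positivity
        · exact hsub.eventuallyLE

noncomputable def mlg (t a : ℝ) : ℝ := t ^ a / Real.Gamma (a + 1)

noncomputable def mlpsi (a : ℝ) : ℝ := deriv (Real.log ∘ Real.Gamma) a

lemma hasDerivAt_logGamma (a : ℝ) (ha : 0 < a) :
    HasDerivAt (Real.log ∘ Real.Gamma) (mlpsi a) a := by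
  apply DifferentiableAt.hasDerivAt
  refine ((Real.differentiableAt_Gamma ?_).log (Real.Gamma_ne_zero ?_)) <;>
    exact fun m ↦ ne_of_gt (by have : (0 : ℝ) ≤ m := Nat.cast_nonneg m
                               linarith)

lemma mlpsi_upper (a : ℝ) (ha : 0 < a) : mlpsi a ≤ Real.log a := by
  have h := Real.convexOn_log_Gamma.le_slope_of_hasDerivAt (x := a) (y := a + 1) ha
    (by simp only [mem_Ioi]; linarith) (by linarith) (hasDerivAt_logGamma a ha)
  rw [slope_def_field] at h
  simp only [Function.comp_apply] at h
  rw [Real.Gamma_add_one ha.ne', Real.log_mul ha.ne' (Real.Gamma_pos_of_pos ha).ne'] at h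
  simpa using h

lemma mlpsi_lower (a : ℝ) (ha : 1 ≤ a) : mlpsi 1 ≤ mlpsi a := by
  rcases ha.eq_or_lt with rfl | h
  · exact le_rfl
  have h1 := Real.convexOn_log_Gamma.le_slope_of_hasDerivAt (x := 1) (y := a) (by simp)
    (by simp only [mem_Ioi]; linarith) h (hasDerivAt_logGamma 1 one_pos)
  have h2 := Real.convexOn_log_Gamma.slope_le_of_hasDerivAt (x := 1) (y := a) (by simp)
    (by simp only [mem_Ioi]; linarith) h (hasDerivAt_logGamma a (by linarith))
  exact h1.trans h2

lemma mlg_pos (t a : ℝ) (ht : 0 < t) (ha : -1 < a) : 0 < mlg t a := by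
  have := Real.Gamma_pos_of_pos (s := a + 1) (by linarith)
  unfold mlg
  positivity

lemma mlg_hasDerivAt (t a : ℝ) (ht : 0 < t) (ha : -1 < a) :
    HasDerivAt (mlg t) (mlg t a * (Real.log t - mlpsi (a + 1))) a := by
  have hΓ := Real.Gamma_pos_of_pos (s := a + 1) (by linarith)
  have h1 : HasDerivAt (fun b : ℝ => b * Real.log t - (Real.log ∘ Real.Gamma) (b + 1))
      (Real.log t - mlpsi (a + 1)) a := by
    have := ((hasDerivAt_id a).mul_const (Real.log t)).sub
      ((hasDerivAt_logGamma (a + 1) (by linarith)).comp_add_const a 1)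
    exact this.congr_deriv (by simp)
  have h2 := h1.exp
  have he : ∀ b : ℝ, -1 < b →
      mlg t b = Real.exp (b * Real.log t - (Real.log ∘ Real.Gamma) (b + 1)) := by
    intro b hb
    have := Real.Gamma_pos_of_pos (s := b + 1) (by linarith)
    rw [Real.exp_sub, Function.comp_apply, Real.exp_log this, mlg, Real.rpow_def_of_pos ht,
      mul_comm b]
  rw [he a ha]
  refine h2.congr_of_eventuallyEq ?_
  filter_upwards [lt_mem_nhds ha] with b hb using he b hb

lemma mlg_deriv_bound (t a : ℝ) (ht : 0 < t) (ha : 0 ≤ a) :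
    |mlg t a * (Real.log t - mlpsi (a + 1))| ≤ mlg t a * (|Real.log t| + |mlpsi 1| + 1 + a) := by
  have hg := mlg_pos t a ht (by linarith)
  rw [abs_mul, abs_of_pos hg]
  gcongr
  have h1 := mlpsi_upper (a + 1) (by linarith)
  have h2 := mlpsi_lower (a + 1) (by linarith)
  have h3 := Real.log_le_sub_one_of_pos (x := a + 1) (by linarith)
  rw [abs_le]
  constructor
  · linarith [neg_abs_le (Real.log t), abs_nonneg (mlpsi 1)]
  · linarith [le_abs_self (Real.log t), neg_abs_le (mlpsi 1)]

lemma mlg_bound (t R a : ℝ) (ht : 0 < t) (hR : 0 < R) (ha : 0 ≤ a) :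
    mlg t a ≤ Real.exp R * (t / R) ^ a := by
  have h := gamma_lower a R ha hR
  have hΓ := Real.Gamma_pos_of_pos (s := a + 1) (by linarith)
  unfold mlg
  rw [div_le_iff₀ hΓ, Real.div_rpow ht.le hR.le]
  calc t ^ a = Real.exp R * (t ^ a / R ^ a) * (Real.exp (-R) * R ^ a) := by
        rw [Real.exp_neg]
        have : R ^ a ≠ 0 := by positivity
        field_simp
    _ ≤ _ := by gcongr

open Filter Topology in
lemma ml_dom (ρ lam t C : ℝ) (hρ : 0 < ρ) (hlam : 0 < lam) (ht : 0 < t) (hC : 1 ≤ C) :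
    ∃ u : ℕ → ℝ, Summable u ∧ ∀ (k : ℕ) (a : ℝ), ρ / 2 * k ≤ a → a ≤ 2 * k →
      lam ^ k * (k + 1) * (mlg t a * (C + a)) ≤ u k := by
  obtain ⟨R, hR1, hR2⟩ : ∃ R : ℝ, t ≤ R ∧ lam * (t / R) ^ (ρ / 2) < 1 / 2 := by
    have h1 : Tendsto (fun R : ℝ => lam * (t / R) ^ (ρ / 2)) atTop (𝓝 (lam * 0 ^ (ρ / 2))) := by
      apply Tendsto.const_mul
      apply Tendsto.rpow_const
      · exact tendsto_const_nhds.div_atTop tendsto_id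
      · right; positivity
    rw [Real.zero_rpow (by positivity), mul_zero] at h1
    obtain ⟨R, h, h'⟩ := ((eventually_ge_atTop t).and
      (h1.eventually (gt_mem_nhds (by norm_num : (0 : ℝ) < 1 / 2)))).exists
    exact ⟨R, h, h'⟩
  have hR : 0 < R := ht.trans_le hR1
  refine ⟨fun k => Real.exp R * ((k + 1) * (C + 2 * k) * (1 / 2) ^ k), ?_, ?_⟩
  · apply Summable.mul_left
    have h0 := summable_pow_mul_geometric_of_norm_lt_one (R := ℝ) 0 (r := 1 / 2) (by norm_num)
    have h1 := summable_pow_mul_geometric_of_norm_lt_one (R := ℝ) 1 (r := 1 / 2) (by norm_num)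
    have h2 := summable_pow_mul_geometric_of_norm_lt_one (R := ℝ) 2 (r := 1 / 2) (by norm_num)
    refine (((h0.mul_left C).add (h1.mul_left (C + 2))).add (h2.mul_left 2)).congr ?_
    intro k
    ring
  · intro k a ha1 ha2
    have ha : 0 ≤ a := le_trans (by positivity) ha1
    have hb := mlg_bound t R a ht hR ha
    have h3 : (t / R) ^ a ≤ ((t / R) ^ (ρ / 2)) ^ k := by
      rw [← Real.rpow_natCast, ← Real.rpow_mul (by positivity)]
      exact Real.rpow_le_rpow_of_exponent_ge (by positivity) ((div_le_one hR).2 hR1) ha1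
    calc lam ^ k * (k + 1) * (mlg t a * (C + a))
        ≤ lam ^ k * (k + 1) * ((Real.exp R * ((t / R) ^ (ρ / 2)) ^ k) * (C + 2 * k)) := by
          gcongr
          exact hb.trans (by gcongr)
      _ = Real.exp R * ((k + 1) * (C + 2 * k) * (lam * (t / R) ^ (ρ / 2)) ^ k) := by
          rw [mul_pow]; ring
      _ ≤ Real.exp R * ((k + 1) * (C + 2 * k) * (1 / 2) ^ k) := by gcongr

lemma ml_deriv (ρ lam t : ℝ) (hρ : 0 < ρ) (hρ1 : ρ ≤ 1) (hlam : 0 < lam) (ht : 0 < t)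
    (c q : ℕ → ℝ) (hcq : ∀ k, c k * q k = k * (-lam) ^ k) (hq : ∀ k, 0 ≤ q k)
    (hqk : ∀ k, q k ≤ k) (hc : ∀ k, |c k| ≤ lam ^ k * (k + 1)) :
    HasDerivAt (fun s : ℝ => ∑' k : ℕ, c k * mlg t (ρ * k + q k * s))
      (∑' k : ℕ, k * (-lam) ^ k *
        (mlg t (ρ * k) * (Real.log t - mlpsi (ρ * k + 1)))) 0 := by
  obtain ⟨u, hu, hub⟩ := ml_dom ρ lam t (|Real.log t| + |mlpsi 1| + 1) hρ hlam ht (by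
    linarith [abs_nonneg (Real.log t), abs_nonneg (mlpsi 1)])
  have hrange : ∀ (k : ℕ) (s : ℝ), s ∈ Ioo (-(ρ / 2)) (ρ / 2) →
      ρ / 2 * k ≤ ρ * k + q k * s ∧ ρ * k + q k * s ≤ 2 * k := by
    intro k s hs
    have h1 := hq k
    have h2 := hqk k
    have hk : (0 : ℝ) ≤ k := Nat.cast_nonneg k
    have h3 : |q k * s| ≤ k * (ρ / 2) := by
      rw [abs_mul, abs_of_nonneg h1]
      have : |s| ≤ ρ / 2 := (abs_lt.2 hs).le
      gcongr
    have h4 := abs_le.1 h3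
    constructor <;> nlinarith
  have h := hasDerivAt_tsum_of_isPreconnected (u := u) (t := Ioo (-(ρ / 2)) (ρ / 2)) (y₀ := 0)
    (y := 0) (g := fun (k : ℕ) (s : ℝ) => c k * mlg t (ρ * k + q k * s))
    (g' := fun (k : ℕ) (s : ℝ) => k * (-lam) ^ k * (mlg t (ρ * k + q k * s) *
      (Real.log t - mlpsi (ρ * k + q k * s + 1)))) hu isOpen_Ioo isPreconnected_Ioo
    ?_ ?_ (by constructor <;> linarith) ?_ (by constructor <;> linarith)
  · simpa using h
  · intro k s hs
    have hr := (hrange k s hs).1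
    have h0 : (0 : ℝ) ≤ ρ / 2 * k := by positivity
    have h1 := mlg_hasDerivAt t (ρ * k + q k * s) ht (by linarith)
    have h2 : HasDerivAt (fun s : ℝ => ρ * k + q k * s) (q k) s := by
      simpa using ((hasDerivAt_id s).const_mul (q k)).const_add (ρ * k)
    have h3 := (h1.comp s h2).const_mul (c k)
    rw [← hcq k]
    convert! h3 using 1
    ring
  · intro k s hs
    have hr := hrange k s hs
    have h0 : (0 : ℝ) ≤ ρ / 2 * k := by positivity
    refine le_trans ?_ (hub k _ hr.1 hr.2)
    rw [Real.norm_eq_abs, abs_mul]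
    have hb := mlg_deriv_bound t _ ht (h0.trans hr.1)
    gcongr
    rw [abs_mul, abs_pow, abs_neg, abs_of_pos hlam, Nat.abs_cast, mul_comm]
    gcongr
    linarith
  · refine Summable.of_norm_bounded hu ?_
    intro k
    have hr := hrange k 0 (by constructor <;> linarith)
    have h0 : (0 : ℝ) ≤ ρ / 2 * k := by positivity
    refine le_trans ?_ (hub k _ hr.1 hr.2)
    have hg := mlg_pos t (ρ * k + q k * 0) ht (by linarith)
    rw [Real.norm_eq_abs, abs_mul, abs_of_pos hg]
    apply mul_le_mul (hc k) _ hg.le (by positivity)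
    apply le_mul_of_one_le_right hg.le
    linarith [abs_nonneg (Real.log t), abs_nonneg (mlpsi 1)]

lemma mlH_analytic (ρ : ℝ) (hρ : 0 < ρ) (hρ1 : ρ ≤ 1) :
    ∃ p : FormalMultilinearSeries ℝ ℝ ℝ, HasFPowerSeriesOnBall (mlH ρ) p 0 ⊤ ∧ p ≠ 0 := by
  set c : ℕ → ℝ := fun k => -((k : ℝ) * (-1) ^ k / Real.Gamma (ρ * k + 1)) with hc
  refine ⟨FormalMultilinearSeries.ofScalars ℝ c, ?_, ?_⟩
  · have hr : (FormalMultilinearSeries.ofScalars ℝ c).radius = ⊤ := by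
      apply FormalMultilinearSeries.radius_eq_top_of_summable_norm
      intro r
      obtain ⟨u, hu, hub⟩ := ml_dom ρ (r + 1) 1 1 hρ (by positivity) one_pos le_rfl
      refine Summable.of_norm_bounded hu ?_
      intro k
      have hk : (0 : ℝ) ≤ k := Nat.cast_nonneg k
      have hb := hub k (ρ * k) (by nlinarith) (by nlinarith)
      refine le_trans ?_ hb
      have hΓ := Real.Gamma_pos_of_pos (s := ρ * k + 1) (by positivity)
      rw [FormalMultilinearSeries.ofScalars_norm, norm_mul, norm_norm, norm_pow, hc]
      simp only [norm_neg, norm_div, norm_mul, norm_pow, norm_one, one_pow, mul_one]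
      rw [Real.norm_of_nonneg hk, Real.norm_of_nonneg hΓ.le, Real.norm_of_nonneg (NNReal.coe_nonneg r)]
      unfold mlg
      rw [Real.one_rpow]
      calc (k : ℝ) / Real.Gamma (ρ * k + 1) * (r : ℝ) ^ k
          = (r : ℝ) ^ k * k * (1 / Real.Gamma (ρ * k + 1) * 1) := by ring
        _ ≤ _ := by
          gcongr
          · exact (lt_add_one _).le
          · linarith
          · nlinarith
    have h := (FormalMultilinearSeries.ofScalars ℝ c).hasFPowerSeriesOnBall (by rw [hr]; simp)
    rw [hr] at h
    have he : (FormalMultilinearSeries.ofScalars ℝ c).sum = mlH ρ := by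
      funext x
      have := FormalMultilinearSeries.ofScalars_sum_eq c x
      unfold FormalMultilinearSeries.ofScalarsSum at this
      rw [this]
      unfold mlH
      apply tsum_congr
      intro k
      rw [neg_pow x k, smul_eq_mul, hc]
      ring
    rw [he] at h
    exact h
  · intro h
    rw [FormalMultilinearSeries.ofScalars_series_eq_zero] at h
    have h1 := congrFun h 1
    have hΓ := Real.Gamma_pos_of_pos (s := ρ * 1 + 1) (by positivity)
    simp [hc] at h1
    simp at hΓ
    exact hΓ.ne' h1

lemma mlH_continuous (ρ : ℝ) (hρ : 0 < ρ) (hρ1 : ρ ≤ 1) : Continuous (mlH ρ) := by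
  obtain ⟨p, hp, -⟩ := mlH_analytic ρ hρ hρ1
  have := hp.continuousOn
  simpa [← continuousOn_univ] using this

open Filter Topology in
lemma mlH_pos (ρ : ℝ) (hρ : 0 < ρ) (hρ1 : ρ ≤ 1) (x : ℝ) (hx : 0 < x) : 0 < mlH ρ x := by
  refine lt_of_le_of_ne (mlH_props ρ hρ hρ1 x x hx.le le_rfl).1 ?_
  intro h0
  obtain ⟨p, hp, hp0⟩ := mlH_analytic ρ hρ hρ1
  have han : AnalyticOnNhd ℝ (mlH ρ) univ := by
    have := hp.analyticOnNhd
    simpa using this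
  have hz : EqOn (mlH ρ) 0 univ := by
    apply han.eqOn_zero_of_preconnected_of_eventuallyEq_zero isPreconnected_univ (mem_univ (x + 1))
    filter_upwards [lt_mem_nhds (show x < x + 1 by linarith)] with y hy
    have h1 := (mlH_props ρ hρ hρ1 x y hx.le hy.le).2
    have h2 := (mlH_props ρ hρ hρ1 y y (hx.trans hy).le le_rfl).1
    rw [← h0, mul_zero] at h1
    simp only [Pi.zero_apply]
    nlinarith
  apply hp0
  apply hp.hasFPowerSeriesAt.eq_zero_of_eventually
  exact Eventually.of_forall fun y => hz (mem_univ y)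

lemma beta_real (a ε t : ℝ) (ha : 0 ≤ a) (hε : 0 < ε) (ht : 0 < t) :
    ∫ u in (0:ℝ)..t, u ^ a * (t - u) ^ (ε - 1) =
      Real.Gamma (a + 1) * Real.Gamma ε * mlg t (a + ε) := by
  have h := Complex.betaIntegral_scaled ((a : ℂ) + 1) (ε : ℂ) ht
  rw [Complex.betaIntegral_eq_Gamma_mul_div _ _ (by simp; linarith) (by simpa using hε)] at h
  have h1 : ∫ x in (0:ℝ)..t, (x : ℂ) ^ ((a : ℂ) + 1 - 1) * ((t : ℂ) - x) ^ ((ε : ℂ) - 1) =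
      ((∫ u in (0:ℝ)..t, u ^ a * (t - u) ^ (ε - 1) : ℝ) : ℂ) := by
    rw [← intervalIntegral.integral_ofReal]
    apply intervalIntegral.integral_congr
    intro u hu
    rw [uIcc_of_le ht.le] at hu
    simp only
    rw [Complex.ofReal_mul, Complex.ofReal_cpow hu.1, Complex.ofReal_cpow (by linarith [hu.2])]
    push_cast
    simp
  rw [h1] at h
  have h2 : (t : ℂ) ^ ((a : ℂ) + 1 + ε - 1) * (Complex.Gamma ((a : ℂ) + 1) * Complex.Gamma ε /
      Complex.Gamma ((a : ℂ) + 1 + ε)) =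
      ((Real.Gamma (a + 1) * Real.Gamma ε * mlg t (a + ε) : ℝ) : ℂ) := by
    unfold mlg
    rw [show (a : ℂ) + 1 + ε - 1 = ((a + ε : ℝ) : ℂ) by push_cast; ring,
      show (a : ℂ) + 1 + ε = ((a + ε + 1 : ℝ) : ℂ) by push_cast; ring,
      show (a : ℂ) + 1 = ((a + 1 : ℝ) : ℂ) by push_cast; ring,
      Complex.Gamma_ofReal, Complex.Gamma_ofReal, Complex.Gamma_ofReal,
      ← Complex.ofReal_cpow ht.le]
    push_cast
    ring
  rw [h2] at h
  exact_mod_cast h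

lemma beta_integrable (a ε t : ℝ) (ha : 0 ≤ a) (hε : 0 < ε) (ht : 0 < t) :
    IntervalIntegrable (fun u => u ^ a * (t - u) ^ (ε - 1)) MeasureTheory.volume 0 t := by
  by_contra h
  have h1 := intervalIntegral.integral_undef h
  rw [beta_real a ε t ha hε ht] at h1
  have h2 := Real.Gamma_pos_of_pos (s := a + 1) (by linarith)
  have h3 := Real.Gamma_pos_of_pos hε
  have h4 := mlg_pos t (a + ε) ht (by linarith)
  have : 0 < Real.Gamma (a + 1) * Real.Gamma ε * mlg t (a + ε) := by positivity
  linarith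

lemma mlA_lower (ρ lam t ε : ℝ) (hρ : 0 < ρ) (hρ1 : ρ ≤ 1) (hlam : 0 < lam) (ht : 0 < t)
    (hε : 0 < ε) (hερ : ε ≤ ρ / 2) :
    mlH ρ (lam * t ^ ρ) * mlg t (ρ + ε) ≤
      mlg t ρ * ∑' k : ℕ, -((k : ℝ) * (-lam) ^ k * mlg t (ρ * k + ε)) := by
  have hΓε := Real.Gamma_pos_of_pos hε
  have hΓ : ∀ k : ℕ, 0 < Real.Gamma (ρ * k + 1) := fun k =>
    Real.Gamma_pos_of_pos (by positivity)
  have hw : ∀ u ∈ Icc (0 : ℝ) t, 0 ≤ (t - u) ^ (ε - 1) := fun u hu =>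
    Real.rpow_nonneg (by linarith [hu.2]) _
  set F : ℕ → ℝ → ℝ := fun k u =>
    -((k : ℝ) * (-lam) ^ k / Real.Gamma (ρ * k + 1)) * (u ^ (ρ * k) * (t - u) ^ (ε - 1)) with hF
  have hint : ∀ k, MeasureTheory.Integrable (F k) (MeasureTheory.volume.restrict (Ioc 0 t)) := by
    intro k
    have := (beta_integrable (ρ * k) ε t (by positivity) hε ht)
    rw [intervalIntegrable_iff_integrableOn_Ioc_of_le ht.le] at this
    exact this.const_mul _
  have hval : ∀ k, ∫ u in Ioc 0 t, F k u =
      Real.Gamma ε * -((k : ℝ) * (-lam) ^ k * mlg t (ρ * k + ε)) := by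
    intro k
    rw [hF, MeasureTheory.integral_const_mul, ← intervalIntegral.integral_of_le ht.le,
      beta_real _ _ _ (by positivity) hε ht]
    have := (hΓ k).ne'
    field_simp
  have hnorm : ∀ k, ∫ u in Ioc 0 t, ‖F k u‖ =
      Real.Gamma ε * ((k : ℝ) * lam ^ k * mlg t (ρ * k + ε)) := by
    intro k
    have h1 : ∫ u in Ioc 0 t, ‖F k u‖ = ∫ u in Ioc 0 t,
        ((k : ℝ) * lam ^ k / Real.Gamma (ρ * k + 1)) * (u ^ (ρ * k) * (t - u) ^ (ε - 1)) := by
      apply MeasureTheory.setIntegral_congr_fun measurableSet_Ioc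
      intro u hu
      have h2 := hw u ⟨hu.1.le, hu.2⟩
      have h3 : 0 ≤ u ^ (ρ * k) := Real.rpow_nonneg hu.1.le _
      simp only [hF]
      rw [norm_mul, norm_neg, norm_div, norm_mul, norm_pow, norm_neg,
        Real.norm_of_nonneg hlam.le, Real.norm_of_nonneg (Nat.cast_nonneg k),
        Real.norm_of_nonneg (hΓ k).le, Real.norm_of_nonneg (mul_nonneg h3 h2)]
    rw [h1, MeasureTheory.integral_const_mul, ← intervalIntegral.integral_of_le ht.le,
      beta_real _ _ _ (by positivity) hε ht]
    have := (hΓ k).ne'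
    field_simp
  have hsum : Summable fun k => ∫ u in Ioc 0 t, ‖F k u‖ := by
    simp_rw [hnorm]
    apply Summable.mul_left
    obtain ⟨u, hu, hub⟩ := ml_dom ρ lam t 1 hρ hlam ht le_rfl
    refine Summable.of_norm_bounded hu ?_
    intro k
    have hg := mlg_pos t (ρ * k + ε) ht (by have : 0 ≤ ρ * k := by positivity
                                            linarith)
    rw [Real.norm_of_nonneg (by positivity)]
    rcases Nat.eq_zero_or_pos k with rfl | hk
    · have h0 := hub 0 0 (by simp) (by simp)
      have hg0 := mlg_pos t 0 ht (by norm_num)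
      have h1 : (0 : ℝ) ≤ lam ^ 0 * ((0 : ℕ) + 1) * (mlg t 0 * (1 + 0)) := by positivity
      simpa using h1.trans h0
    · have hk1 : (1 : ℝ) ≤ k := by exact_mod_cast hk
      refine le_trans ?_ (hub k (ρ * k + ε) (by nlinarith) (by nlinarith))
      have hgk : 0 ≤ ρ * k := by positivity
      calc (k : ℝ) * lam ^ k * mlg t (ρ * k + ε) = lam ^ k * k * (mlg t (ρ * k + ε) * 1) := by ring
        _ ≤ _ := by
          gcongr
          · linarith
          · linarith
  have hS := MeasureTheory.hasSum_integral_of_summable_integral_norm hint hsum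
  simp_rw [hval] at hS
  have hpt : ∀ u ∈ Ioc (0 : ℝ) t, ∑' k, F k u = mlH ρ (lam * u ^ ρ) * (t - u) ^ (ε - 1) := by
    intro u hu
    unfold mlH
    rw [← tsum_mul_right]
    apply tsum_congr
    intro k
    simp only [hF]
    rw [show -(lam * u ^ ρ) = -lam * u ^ ρ by ring, mul_pow, Real.rpow_mul hu.1.le,
      Real.rpow_natCast]
    ring
  rw [MeasureTheory.setIntegral_congr_fun measurableSet_Ioc hpt,
    ← intervalIntegral.integral_of_le ht.le] at hS
  have hA := hS.tsum_eq
  rw [tsum_mul_left] at hA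
  have hmono : ∫ u in (0:ℝ)..t, mlH ρ (lam * t ^ ρ) * (u ^ ρ * (t - u) ^ (ε - 1)) ≤
      ∫ u in (0:ℝ)..t, t ^ ρ * (mlH ρ (lam * u ^ ρ) * (t - u) ^ (ε - 1)) := by
    apply intervalIntegral.integral_mono_on ht.le
    · exact (beta_integrable ρ ε t hρ.le hε ht).const_mul _
    · apply IntervalIntegrable.const_mul
      have h0 := beta_integrable 0 ε t le_rfl hε ht
      simp only [Real.rpow_zero, one_mul] at h0
      apply h0.continuousOn_mul
      apply Continuous.continuousOn
      apply (mlH_continuous ρ hρ hρ1).comp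
      exact continuous_const.mul (Real.continuous_rpow_const hρ.le)
    · intro u hu
      have h1 : u ^ ρ ≤ t ^ ρ := Real.rpow_le_rpow hu.1 hu.2 hρ.le
      have h2 : 0 ≤ u ^ ρ := Real.rpow_nonneg hu.1 _
      have h3 := (mlH_props ρ hρ hρ1 (lam * u ^ ρ) (lam * t ^ ρ) (by positivity) (by gcongr)).2
      have h4 : u ^ ρ * mlH ρ (lam * t ^ ρ) ≤ t ^ ρ * mlH ρ (lam * u ^ ρ) := by
        rw [mul_assoc, mul_assoc] at h3
        exact le_of_mul_le_mul_left h3 hlam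
      have := mul_le_mul_of_nonneg_right h4 (hw u hu)
      nlinarith
  rw [intervalIntegral.integral_const_mul, intervalIntegral.integral_const_mul, ← hA,
    beta_real ρ ε t hρ.le hε ht] at hmono
  have hΓρ := Real.Gamma_pos_of_pos (s := ρ + 1) (by linarith)
  have hfin : Real.Gamma (ρ + 1) * Real.Gamma ε * (mlH ρ (lam * t ^ ρ) * mlg t (ρ + ε)) ≤
      Real.Gamma (ρ + 1) * Real.Gamma ε *
        (mlg t ρ * ∑' k : ℕ, -((k : ℝ) * (-lam) ^ k * mlg t (ρ * k + ε))) := by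
    have : Real.Gamma (ρ + 1) * mlg t ρ = t ^ ρ := by
      unfold mlg
      field_simp
    calc _ = mlH ρ (lam * t ^ ρ) * (Real.Gamma (ρ + 1) * Real.Gamma ε * mlg t (ρ + ε)) := by ring
      _ ≤ _ := hmono
      _ = _ := by rw [← this]; ring
  exact le_of_mul_le_mul_left hfin (by positivity)

lemma ml_pow (r lam t : ℝ) (ht : 0 < t) :
    mittagLeffler r (-(lam * t ^ r)) = ∑' k : ℕ, (-lam) ^ k * mlg t (r * k) := by
  unfold mittagLeffler mlg
  apply tsum_congr
  intro k
  rw [show -(lam * t ^ r) = -lam * t ^ r by ring, mul_pow, Real.rpow_mul ht.le, Real.rpow_natCast]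
  ring

open Filter Topology in
lemma ml_main (ρ lam t : ℝ) (hρ : 0 < ρ) (hρ1 : ρ < 1) (hlam : 0 < lam) (ht : 2 ≤ t) :
    ∃ D : ℝ, D < 0 ∧ HasDerivAt (fun r : ℝ => mittagLeffler r (-(lam * t ^ r))) D ρ := by
  have ht0 : 0 < t := by linarith
  set D := ∑' k : ℕ, k * (-lam) ^ k *
        (mlg t (ρ * k) * (Real.log t - mlpsi (ρ * k + 1))) with hD
  refine ⟨D, ?_, ?_⟩
  · set q : ℕ → ℝ := fun k => if k = 0 then 0 else 1 with hq
    have hA := ml_deriv ρ lam t hρ hρ1.le hlam ht0 (fun k => k * (-lam) ^ k) q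
      (by intro k; rcases Nat.eq_zero_or_pos k with rfl | hk
          · simp
          · simp [hq, hk.ne'])
      (by intro k; simp only [hq]; split_ifs <;> norm_num)
      (by intro k; rcases Nat.eq_zero_or_pos k with rfl | hk
          · simp [hq]
          · simp only [hq, hk.ne', if_false]; exact_mod_cast hk)
      (by intro k
          rw [abs_mul, abs_pow, abs_neg, abs_of_pos hlam, Nat.abs_cast, mul_comm]
          gcongr
          linarith)
    rw [← hD] at hA
    have hAeq : ∀ s : ℝ, ∑' k : ℕ, (k * (-lam) ^ k) * mlg t (ρ * k + q k * s) =
        - ∑' k : ℕ, -((k : ℝ) * (-lam) ^ k * mlg t (ρ * k + s)) := by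
      intro s
      rw [← tsum_neg]
      apply tsum_congr
      intro k
      rcases Nat.eq_zero_or_pos k with rfl | hk
      · simp
      · simp [hq, hk.ne']
    set H := mlH ρ (lam * t ^ ρ) with hH
    have hHpos : 0 < H := mlH_pos ρ hρ hρ1.le _ (by positivity)
    have hg := mlg_pos t ρ ht0 (by linarith)
    have hB := (mlg_hasDerivAt t (ρ + 0) ht0 (by linarith)).comp_const_add ρ 0
    have hφ := (hB.const_mul H).add (hA.const_mul (mlg t ρ))
    rw [add_zero] at hφ
    set φ : ℝ → ℝ := fun s => H * mlg t (ρ + s) +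
      mlg t ρ * ∑' k : ℕ, (k * (-lam) ^ k) * mlg t (ρ * k + q k * s) with hφdef
    have hφ' : HasDerivAt φ (H * (mlg t ρ * (Real.log t - mlpsi (ρ + 1))) + mlg t ρ * D) 0 := hφ
    have hφ0 : φ 0 = 0 := by
      simp only [hφdef, hAeq, add_zero]
      have : H = ∑' k : ℕ, -((k : ℝ) * (-lam) ^ k * mlg t (ρ * k)) := by
        rw [hH]
        unfold mlH mlg
        apply tsum_congr
        intro k
        rw [show -(lam * t ^ ρ) = -lam * t ^ ρ by ring, mul_pow, Real.rpow_mul ht0.le,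
          Real.rpow_natCast]
        ring
      rw [← this]
      ring
    have hle : H * (mlg t ρ * (Real.log t - mlpsi (ρ + 1))) + mlg t ρ * D ≤ 0 := by
      have h1 := (hφ'.hasDerivWithinAt (s := Ioi 0))
      rw [hasDerivWithinAt_iff_tendsto_slope' (by simp)] at h1
      refine le_of_tendsto h1 ?_
      filter_upwards [Ioc_mem_nhdsGT (show (0 : ℝ) < ρ / 2 by positivity)] with ε hε
      rw [slope_def_field, hφ0, sub_zero, sub_zero]
      apply div_nonpos_of_nonpos_of_nonneg _ hε.1.le
      simp only [hφdef, hAeq]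
      have := mlA_lower ρ lam t ε hρ hρ1.le hlam ht0 hε.1 hε.2
      rw [← hH] at this
      linarith
    have hψ : 0 < Real.log t - mlpsi (ρ + 1) := by
      have h1 := mlpsi_upper (ρ + 1) (by linarith)
      have h2 : Real.log (ρ + 1) < Real.log t := Real.log_lt_log (by linarith) (by linarith)
      linarith
    have h3 : mlg t ρ * (H * (Real.log t - mlpsi (ρ + 1)) + D) ≤ 0 := by linarith
    have h4 : H * (Real.log t - mlpsi (ρ + 1)) + D ≤ 0 := by
      by_contra hcon
      push Not at hcon
      have := mul_pos hg hcon
      linarith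
    have h5 := mul_pos hHpos hψ
    linarith
  · have hA := ml_deriv ρ lam t hρ hρ1.le hlam ht0 (fun k => (-lam) ^ k) (fun k => k)
      (by intro k; ring) (by intro k; positivity) (by intro k; exact le_rfl)
      (by intro k
          rw [abs_pow, abs_neg, abs_of_pos hlam]
          apply le_mul_of_one_le_right (by positivity)
          have : (0 : ℝ) ≤ k := Nat.cast_nonneg k
          linarith)
    rw [← hD, ← sub_self ρ] at hA
    have h2 := hA.comp_sub_const ρ ρ
    convert! h2 using 1
    funext r
    rw [ml_pow r lam t ht0]
    apply tsum_congr
    intro k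
    congr 2
    ring

/-- With `B₁ = 43`, `B₂ = 4.6`: if `ρ₀λ₀ > 2B₁e^{−B₁/B₂}` and `2 ≤ t₀ ≤ e^{B₁/B₂}`,
then for every `λ ≥ λ₀` the function `ρ ↦ E_ρ(−λ t₀^ρ)` is strictly decreasing on
`[ρ₀, 1)`; moreover `2B₁e^{−B₁/B₂} < 0.0075` (so the hypothesis holds whenever
`ρ₀λ₀ > 0.0075`, e.g. with `t₀ = 2`). -/
theorem stmt3 (ρ₀ lam₀ t₀ : ℝ) (hρ₀ : 0 < ρ₀) (hρ₀' : ρ₀ < 1) (hlam₀ : 0 < lam₀)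
    (h : 2 * 43 * Real.exp (-(43 / 4.6)) < ρ₀ * lam₀)
    (ht₀ : 2 ≤ t₀) (ht₀' : t₀ ≤ Real.exp (43 / 4.6)) :
    (∀ lam : ℝ, lam₀ ≤ lam →
      StrictAntiOn (fun ρ : ℝ => mittagLeffler ρ (-(lam * t₀ ^ ρ))) (Set.Ico ρ₀ 1)) ∧
    2 * 43 * Real.exp (-(43 / 4.6)) < 0.0075 := by
  refine ⟨fun lam hlam => ?_, ?_⟩
  · have hl : 0 < lam := hlam₀.trans_le hlam
    apply strictAntiOn_of_deriv_neg (convex_Ico ρ₀ 1)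
    · intro ρ hρ
      obtain ⟨D, _, h2⟩ := ml_main ρ lam t₀ (hρ₀.trans_le hρ.1) hρ.2 hl ht₀
      exact h2.continuousAt.continuousWithinAt
    · intro ρ hρ
      rw [interior_Ico] at hρ
      obtain ⟨D, h1, h2⟩ := ml_main ρ lam t₀ (hρ₀.trans hρ.1) hρ.2 hl ht₀
      rw [h2.deriv]
      exact h1
  · have h1 : (2.7182818283 : ℝ) ^ 9 ≤ Real.exp 9 := by
      have := Real.exp_one_gt_d9
      calc (2.7182818283 : ℝ) ^ 9 ≤ Real.exp 1 ^ 9 := by gcongr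
        _ = Real.exp 9 := by rw [← Real.exp_nat_mul]; norm_num
    have h2 : (1.4155 : ℝ) ≤ Real.exp (8 / 23) := by
      have := Real.sum_le_exp_of_nonneg (x := 8 / 23) (by norm_num) 5
      refine le_trans ?_ this
      norm_num [Finset.sum_range_succ, Nat.factorial]
    have h3 : (11468 : ℝ) ≤ Real.exp (43 / 4.6) := by
      rw [show (43 / 4.6 : ℝ) = 9 + 8 / 23 by norm_num, Real.exp_add]
      calc (11468 : ℝ) ≤ 2.7182818283 ^ 9 * 1.4155 := by norm_num
        _ ≤ _ := by gcongr
    rw [Real.exp_neg, ← div_eq_mul_inv, div_lt_iff₀ (by positivity)]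
    linarith
end
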